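/- arXiv:1603.09218 — 2 statements merged into one kernel-verified Lean document; each statement's English description precedes it below -/
import Mathlib

section
/- The ordered monomials a^{i₁}_{j₁}a^{i₂}_{j₂}⋯a^{i_m}_{j_m}∂^{k₁}_{l₁}∂^{k₂}_{l₂}⋯∂^{k_n}_{l_n}, with m, n ∈ ℕ₀ and index pairs satisfying, for every p, either i_p < i_{p+1} or (i_p = i_{p+1} and j_p ≤ j_{p+1}), and likewise either k_p < k_{p+1} or (k_p = k_{p+1} and l_p ≤ l_{p+1}), form a ℂ-vector-space basis of 𝒟q⁺(GL₂). -/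
noncomputable section

/-- Generators `a¹₁, a¹₂, a²₁, a²₂, ∂¹₁, ∂¹₂, ∂²₁, ∂²₂` of the algebra
`𝒟q⁺(GL₂)` of quantum differential operators. -/
inductive QGen : Type
  | a11 | a12 | a21 | a22 | p11 | p12 | p21 | p22

abbrev FQ : Type := FreeAlgebra ℂ QGen

def gQ : QGen → FQ := FreeAlgebra.ι ℂ

/-- The defining relations of `𝒟q⁺(GL₂)`. -/
inductive QRel (q : ℂ) : FQ → FQ → Prop
  -- the six `a`-relations
  | a1 : QRel q (gQ .a12 * gQ .a11)
      (gQ .a11 * gQ .a12 + (1 - q⁻¹ ^ 2) • (gQ .a12 * gQ .a22))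
  | a2 : QRel q (gQ .a22 * gQ .a11) (gQ .a11 * gQ .a22)
  | a3 : QRel q (gQ .a21 * gQ .a11)
      (gQ .a11 * gQ .a21 - (1 - q⁻¹ ^ 2) • (gQ .a22 * gQ .a21))
  | a4 : QRel q (gQ .a22 * gQ .a12) ((q ^ 2) • (gQ .a12 * gQ .a22))
  | a5 : QRel q (gQ .a21 * gQ .a12)
      (gQ .a12 * gQ .a21 + (1 - q⁻¹ ^ 2) • (gQ .a11 * gQ .a22 - gQ .a22 * gQ .a22))
  | a6 : QRel q (gQ .a22 * gQ .a21) ((q⁻¹ ^ 2) • (gQ .a21 * gQ .a22))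
  -- the six `∂`-relations
  | p1 : QRel q (gQ .p12 * gQ .p11)
      (gQ .p11 * gQ .p12 + (1 - q⁻¹ ^ 2) • (gQ .p12 * gQ .p22))
  | p2 : QRel q (gQ .p22 * gQ .p11) (gQ .p11 * gQ .p22)
  | p3 : QRel q (gQ .p21 * gQ .p11)
      (gQ .p11 * gQ .p21 - (1 - q⁻¹ ^ 2) • (gQ .p22 * gQ .p21))
  | p4 : QRel q (gQ .p22 * gQ .p12) ((q ^ 2) • (gQ .p12 * gQ .p22))
  | p5 : QRel q (gQ .p21 * gQ .p12)
      (gQ .p12 * gQ .p21 + (1 - q⁻¹ ^ 2) • (gQ .p11 * gQ .p22 - gQ .p22 * gQ .p22))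
  | p6 : QRel q (gQ .p22 * gQ .p21) ((q⁻¹ ^ 2) • (gQ .p21 * gQ .p22))
  -- the sixteen cross relations
  | c1 : QRel q (gQ .p11 * gQ .a11)
      (-((1 - q⁻¹ ^ 2) • (gQ .p12 * gQ .a21)) + (q⁻¹ ^ 2) • (gQ .a11 * gQ .p11)
        + (q⁻¹ ^ 2 - q⁻¹ ^ 4) • (gQ .a12 * gQ .p21))
  | c2 : QRel q (gQ .p11 * gQ .a12)
      ((q⁻¹ ^ 2 - 1) • (gQ .p12 * gQ .a22) + (q⁻¹ ^ 2) • (gQ .a12 * gQ .p11))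
  | c3 : QRel q (gQ .p11 * gQ .a21)
      ((1 - q ^ 2) • (gQ .p21 * gQ .a11) - ((q - q⁻¹) ^ 2) • (gQ .p22 * gQ .a21)
        + gQ .a21 * gQ .p11 + (1 - q⁻¹ ^ 2) • (gQ .a22 * gQ .p21))
  | c4 : QRel q (gQ .p11 * gQ .a22)
      ((1 - q ^ 2) • (gQ .p21 * gQ .a12) - ((q - q⁻¹) ^ 2) • (gQ .p22 * gQ .a22)
        + gQ .a22 * gQ .p11)
  | c5 : QRel q (gQ .p12 * gQ .a11)
      (gQ .a11 * gQ .p12 + (1 - q⁻¹ ^ 2) • (gQ .a12 * gQ .p22)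
        + (q⁻¹ ^ 2 - 1) • (gQ .a12 * gQ .p11))
  | c6 : QRel q (gQ .p12 * gQ .a12) ((q⁻¹ ^ 2) • (gQ .a12 * gQ .p12))
  | c7 : QRel q (gQ .p12 * gQ .a21)
      ((q⁻¹ ^ 2 - 1) • (gQ .p22 * gQ .a11) + gQ .a21 * gQ .p12
        + (q⁻¹ ^ 2 - 1) • (gQ .a22 * gQ .p11) + (1 - q⁻¹ ^ 2) • (gQ .a22 * gQ .p22))
  | c8 : QRel q (gQ .p12 * gQ .a22)
      ((q⁻¹ ^ 2 - 1) • (gQ .p22 * gQ .a12) + (q⁻¹ ^ 2) • (gQ .a22 * gQ .p12))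
  | c9 : QRel q (gQ .p21 * gQ .a11)
      ((q⁻¹ ^ 2) • (gQ .a11 * gQ .p21) - (1 - q⁻¹ ^ 2) • (gQ .p22 * gQ .a21))
  | c10 : QRel q (gQ .p21 * gQ .a12)
      ((q⁻¹ ^ 2 - 1) • (gQ .p22 * gQ .a22) + gQ .a12 * gQ .p21)
  | c11 : QRel q (gQ .p21 * gQ .a21) ((q⁻¹ ^ 2) • (gQ .a21 * gQ .p21))
  | c12 : QRel q (gQ .p21 * gQ .a22) (gQ .a22 * gQ .p21)
  | c13 : QRel q (gQ .p22 * gQ .a11)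
      (gQ .a11 * gQ .p22 + (1 - q ^ 2) • (gQ .a12 * gQ .p21))
  | c14 : QRel q (gQ .p22 * gQ .a12) (gQ .a12 * gQ .p22)
  | c15 : QRel q (gQ .p22 * gQ .a21)
      ((q⁻¹ ^ 2) • (gQ .a21 * gQ .p22) + (q⁻¹ ^ 2 - 1) • (gQ .a22 * gQ .p21))
  | c16 : QRel q (gQ .p22 * gQ .a22) ((q⁻¹ ^ 2) • (gQ .a22 * gQ .p22))

/-- The algebra `𝒟q⁺(GL₂)` of quantum differential operators on `GL₂`. -/
abbrev DqPlus (q : ℂ) : Type := RingQuot (QRel q)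

def a11 (q : ℂ) : DqPlus q := RingQuot.mkAlgHom ℂ (QRel q) (gQ .a11)
def a12 (q : ℂ) : DqPlus q := RingQuot.mkAlgHom ℂ (QRel q) (gQ .a12)
def a21 (q : ℂ) : DqPlus q := RingQuot.mkAlgHom ℂ (QRel q) (gQ .a21)
def a22 (q : ℂ) : DqPlus q := RingQuot.mkAlgHom ℂ (QRel q) (gQ .a22)
def p11 (q : ℂ) : DqPlus q := RingQuot.mkAlgHom ℂ (QRel q) (gQ .p11)
def p12 (q : ℂ) : DqPlus q := RingQuot.mkAlgHom ℂ (QRel q) (gQ .p12)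
def p21 (q : ℂ) : DqPlus q := RingQuot.mkAlgHom ℂ (QRel q) (gQ .p21)
def p22 (q : ℂ) : DqPlus q := RingQuot.mkAlgHom ℂ (QRel q) (gQ .p22)

/-- The quantum determinant `det_q(A) = a¹₁a²₂ − q²a¹₂a²₁`. -/
def detA (q : ℂ) : DqPlus q := a11 q * a22 q - (q ^ 2) • (a12 q * a21 q)

/-- The quantum determinant `det_q(D) = ∂¹₁∂²₂ − q²∂¹₂∂²₁`. -/
def detD (q : ℂ) : DqPlus q := p11 q * p22 q - (q ^ 2) • (p12 q * p21 q)

/-- The ordered PBW monomials of `𝒟q⁺(GL₂)`: since the admissible index sequences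
are exactly the weakly increasing ones in the lexicographic order
`(1,1) < (1,2) < (2,1) < (2,2)`, they correspond bijectively to exponent vectors
`(e₁,…,e₄,f₁,…,f₄) ∈ ℕ₀⁸` via
`a¹₁^{e₁}a¹₂^{e₂}a²₁^{e₃}a²₂^{e₄}∂¹₁^{f₁}∂¹₂^{f₂}∂²₁^{f₃}∂²₂^{f₄}`. -/
def pbwDq (q : ℂ) : (ℕ × ℕ × ℕ × ℕ) × (ℕ × ℕ × ℕ × ℕ) → DqPlus q :=
  fun x =>
    a11 q ^ x.1.1 * a12 q ^ x.1.2.1 * a21 q ^ x.1.2.2.1 * a22 q ^ x.1.2.2.2 *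
    (p11 q ^ x.2.1 * p12 q ^ x.2.2.1 * p21 q ^ x.2.2.2.1 * p22 q ^ x.2.2.2.2)

/-!
The proof is Bergman's diamond lemma. Solving the relations for the words `x y` with `y < x` gives
rules whose right-hand sides are combinations of sorted words, and every word of length three with
two descents reduces to the same element whichever descent is rewritten first. Attach to each
unsorted word one relator rewriting it: modulo preceding words it is that word, so these relators
together with the sorted words form a basis of the free algebra. Since all overlaps resolve, two
relators rewriting the same word differ by relators of preceding words, so the attached relators
already span the ideal of relations, and the sorted words are a basis of the quotient.
-/

section UnitriangularFamilies

variable {ι R M : Type*} [Ring R] [AddCommGroup M] [Module R M]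
  {r : ι → ι → Prop} [IsWellFounded ι r] (e : Module.Basis ι R M) {b : ι → M}

theorem linearIndependent_of_unitriangular
    (hb : ∀ i, e i - b i ∈ Submodule.span R (e '' {j | r j i})) : LinearIndependent R b := by
  classical
  rw [linearIndependent_iff]
  intro l hl
  by_contra hne
  obtain ⟨i, hi, hmax⟩ := l.support.exists_max_image (IsWellFounded.rank r)
    (Finsupp.support_nonempty_iff.2 hne)
  have hcoord_lower : ∀ j ∈ l.support, e.coord i (e j - b j) = 0 := by
    intro j hj
    suffices Submodule.span R (e '' {m | r m j}) ≤ LinearMap.ker (e.coord i) from this (hb j)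
    rw [Submodule.span_le]
    rintro _ ⟨m, hm, rfl⟩
    have hmi : m ≠ i := by
      rintro rfl
      exact (hmax j hj).not_gt (IsWellFounded.rank_lt_of_rel hm)
    simp [hmi]
  have hcoord : ∀ j ∈ l.support, e.coord i (b j) = if j = i then 1 else 0 := by
    intro j hj
    have := hcoord_lower j hj
    rw [map_sub, sub_eq_zero] at this
    rw [← this, e.coord_apply, e.repr_self, Finsupp.single_apply]
  refine Finsupp.mem_support_iff.1 hi ?_
  calc l i = ∑ j ∈ l.support, l j • e.coord i (b j) := by
        rw [Finset.sum_congr rfl fun j hj => by rw [hcoord j hj]]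
        simp
    _ = e.coord i (Finsupp.linearCombination R b l) := by
        simp [Finsupp.linearCombination_apply, Finsupp.sum]
    _ = 0 := by rw [hl, map_zero]

theorem span_eq_top_of_unitriangular
    (hb : ∀ i, e i - b i ∈ Submodule.span R (e '' {j | r j i})) :
    Submodule.span R (Set.range b) = ⊤ := by
  have mem_span : ∀ i, e i ∈ Submodule.span R (Set.range b) := by
    intro i
    induction i using IsWellFounded.induction r with
    | ind i ih =>
      have hlower : Submodule.span R (e '' {j | r j i}) ≤ Submodule.span R (Set.range b) :=
        Submodule.span_le.2 (Set.image_subset_iff.2 ih)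
      simpa using add_mem (hlower (hb i)) (Submodule.subset_span (Set.mem_range_self i))
  rw [eq_top_iff, ← e.span_eq, Submodule.span_le]
  exact Set.range_subset_iff.2 mem_span

end UnitriangularFamilies

section Words

variable {X : Type*}

/-- The colexicographic comparison of words of equal length, with larger letters counting as
smaller: `v` precedes `w` if at the last position where they differ the letter of `v` is the
larger one. Words are compared from the right because the straightening rules always raise the last
letter but may raise or lower the first. -/
def WordLT [LT X] (v w : List X) : Prop :=
  ∃ p p' x x' s, p.length = p'.length ∧ x' < x ∧ v = p ++ x :: s ∧ w = p' ++ x' :: s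

theorem WordLT.append_append [LT X] {v w : List X} (h : WordLT v w) (s t : List X) :
    WordLT (s ++ v ++ t) (s ++ w ++ t) := by
  obtain ⟨p, p', x, x', u, hlen, hlt, rfl, rfl⟩ := h
  exact ⟨s ++ p, s ++ p', x, x', u ++ t, by simp [hlen], hlt, by simp, by simp⟩

theorem wordLT_pair [LT X] (a x : X) {b y : X} (h : y < b) : WordLT [a, b] [x, y] :=
  ⟨[a], [x], b, y, [], rfl, h, rfl, rfl⟩

theorem wordLT_triple [LT X] (a x : X) {b c y z : X} (h : z < c ∨ z = c ∧ y < b) :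
    WordLT [a, b, c] [x, y, z] := by
  rcases h with h | ⟨rfl, h⟩
  · exact ⟨[a, b], [x, y], c, z, [], rfl, h, rfl, rfl⟩
  · exact ⟨[a], [x], b, y, [z], rfl, h, rfl, rfl⟩

instance [Preorder X] [WellFoundedGT X] : IsWellFounded (List X) WordLT where
  wf := by
    refine Subrelation.wf (r := InvImage (List.Shortlex (· > ·)) List.reverse) ?_
      (InvImage.wf _ (List.Shortlex.wf wellFounded_gt))
    rintro _ _ ⟨p, p', x, x', s, hlen, hlt, rfl, rfl⟩
    refine List.Shortlex.of_lex (by simp [hlen]) ?_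
    simpa using List.Lex.append_left (· > ·) (List.Lex.rel hlt) s.reverse

theorem exists_descent_of_not_sortedLE [LinearOrder X] {w : List X} (h : ¬ w.SortedLE) :
    ∃ u x y v, y < x ∧ w = u ++ x :: y :: v := by
  rw [List.sortedLE_iff_isChain, List.isChain_iff_forall_rel_of_append_cons_cons] at h
  push Not at h
  obtain ⟨x, y, u, v, hw, hyx⟩ := h
  exact ⟨u, x, y, v, hyx, hw⟩

theorem not_sortedLE_of_descent [LinearOrder X] {x y : X} (hyx : y < x) (u v : List X) :
    ¬ (u ++ x :: y :: v).SortedLE := fun h =>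
  hyx.not_ge (List.isChain_append_cons_cons.1 h.isChain).2.1

end Words

section WordMonomials

variable (k : Type*) {X : Type*} [CommRing k]

/-- The monomial of the free algebra spelled by a word. -/
def wordMonomial (w : List X) : FreeAlgebra k X := (w.map (FreeAlgebra.ι k)).prod

theorem wordMonomial_append (v w : List X) :
    wordMonomial k (v ++ w) = wordMonomial k v * wordMonomial k w := by
  simp [wordMonomial]

/-- The word monomials as a basis of the free algebra. -/
def wordBasis : Module.Basis (List X) k (FreeAlgebra k X) :=
  (FreeAlgebra.basisFreeMonoid k X).reindex FreeMonoid.toList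

theorem wordBasis_apply (w : List X) : wordBasis k w = wordMonomial k w := by
  simp [wordBasis, wordMonomial, FreeAlgebra.basisFreeMonoid,
    FreeAlgebra.equivMonoidAlgebraFreeMonoid, MonoidAlgebra.coeffLinearEquiv, FreeMonoid.lift_apply]

theorem span_range_wordMonomial :
    Submodule.span k (Set.range (wordMonomial k : List X → FreeAlgebra k X)) = ⊤ := by
  simpa only [funext (wordBasis_apply k)] using (wordBasis k (X := X)).span_eq

end WordMonomials

/-- A system of quadratic rewriting rules on the free algebra, one for each descent `y < x`: the
word `x y` becomes `rhs x y`, a combination of words `a b` with `y < b`, which precede `x y` for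
`WordLT`. The values of `rhs` at other pairs are irrelevant. -/
structure StraighteningLaw (k X : Type*) [CommRing k] [LinearOrder X] where
  rhs : X → X → FreeAlgebra k X
  rhs_mem : ∀ {x y}, y < x →
    rhs x y ∈ Submodule.span k {m | ∃ a b, y < b ∧ wordMonomial k [a, b] = m}

namespace StraighteningLaw

variable {k X M : Type*} [CommRing k] [LinearOrder X] [AddCommGroup M] [Module k M]
  (L : StraighteningLaw k X)

/-- The relator imposed by the rule for the pair `x y`. -/
def relator (x y : X) : FreeAlgebra k X := wordMonomial k [x, y] - L.rhs x y

/-- The linear span of the relators in context whose rewritten word lies in `W`. -/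
def relationSpan (W : Set (List X)) : Submodule k (FreeAlgebra k X) :=
  Submodule.span k {g | ∃ u x y v, y < x ∧ u ++ x :: y :: v ∈ W ∧
    wordMonomial k u * L.relator x y * wordMonomial k v = g}

/-- Bergman's resolvability of overlaps: for each word `x y z` with two descents, the results of
rewriting `x y` and `y z` agree modulo relators of preceding words. -/
def IsConfluent : Prop :=
  ∀ x y z, y < x → z < y → L.rhs x y * wordMonomial k [z] - wordMonomial k [x] * L.rhs y z ∈
    L.relationSpan {w | WordLT w [x, y, z]}

variable {L}

theorem mem_relationSpan {W : Set (List X)} {u v : List X} {x y : X} (hyx : y < x)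
    (h : u ++ x :: y :: v ∈ W) :
    wordMonomial k u * L.relator x y * wordMonomial k v ∈ L.relationSpan W :=
  Submodule.subset_span ⟨u, x, y, v, hyx, h, rfl⟩

theorem relationSpan_context {w : List X} {g : FreeAlgebra k X}
    (hg : g ∈ L.relationSpan {w' | WordLT w' w}) (s t : List X) :
    wordMonomial k s * g * wordMonomial k t ∈ L.relationSpan {w' | WordLT w' (s ++ w ++ t)} := by
  induction hg using Submodule.span_induction with
  | zero => simp
  | add g h _ _ hg hh => simpa only [mul_add, add_mul] using add_mem hg hh
  | smul c g _ hg => simpa only [mul_smul_comm, smul_mul_assoc] using Submodule.smul_mem _ c hg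
  | mem g hg =>
    obtain ⟨u, x, y, v, hyx, hlt, rfl⟩ := hg
    have hlt' : (s ++ u) ++ x :: y :: (v ++ t) ∈ {w' | WordLT w' (s ++ w ++ t)} := by
      simpa using WordLT.append_append hlt s t
    simpa only [wordMonomial_append, mul_assoc] using mem_relationSpan (L := L) hyx hlt'

theorem rhs_mul_mem {x y : X} (hyx : y < x) {N : Submodule k (FreeAlgebra k X)}
    {g : FreeAlgebra k X} (h : ∀ a b, y < b → wordMonomial k [a, b] * g ∈ N) :
    L.rhs x y * g ∈ N := by
  suffices Submodule.span k {m | ∃ a b, y < b ∧ wordMonomial k [a, b] = m} ≤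
      N.comap (LinearMap.mulRight k g) from this (L.rhs_mem hyx)
  rw [Submodule.span_le]
  rintro _ ⟨a, b, hb, rfl⟩
  exact h a b hb

theorem mul_rhs_mem {x y : X} (hyx : y < x) {N : Submodule k (FreeAlgebra k X)}
    {g : FreeAlgebra k X} (h : ∀ a b, y < b → g * wordMonomial k [a, b] ∈ N) :
    g * L.rhs x y ∈ N := by
  suffices Submodule.span k {m | ∃ a b, y < b ∧ wordMonomial k [a, b] = m} ≤
      N.comap (LinearMap.mulLeft k g) from this (L.rhs_mem hyx)
  rw [Submodule.span_le]
  rintro _ ⟨a, b, hb, rfl⟩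
  exact h a b hb

theorem relator_mul_sub_mul_relator_mem {x y x' y' : X} (hyx : y < x) (hyx' : y' < x')
    (m : List X) :
    L.relator x y * wordMonomial k (m ++ [x', y']) -
        wordMonomial k (x :: y :: m) * L.relator x' y' ∈
      L.relationSpan {w | WordLT w (x :: y :: m ++ [x', y'])} := by
  have expand : L.relator x y * wordMonomial k (m ++ [x', y']) -
      wordMonomial k (x :: y :: m) * L.relator x' y' =
      L.relator x y * wordMonomial k m * L.rhs x' y' -
        L.rhs x y * (wordMonomial k m * L.relator x' y') := by
    have : wordMonomial k (x :: y :: m) = wordMonomial k [x, y] * wordMonomial k m :=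
      wordMonomial_append k [x, y] m
    rw [this, wordMonomial_append]
    unfold relator
    noncomm_ring
  rw [expand]
  refine sub_mem (mul_rhs_mem hyx' fun a b hb => ?_) (rhs_mul_mem hyx fun a b hb => ?_)
  · have hlt := WordLT.append_append (wordLT_pair a x' hb) (x :: y :: m) []
    simpa [wordMonomial, mul_assoc] using
      mem_relationSpan (L := L) (u := []) (v := m ++ [a, b]) hyx (by simpa using hlt)
  · have hlt := WordLT.append_append (wordLT_pair a x hb) [] (m ++ [x', y'])
    simpa [wordMonomial, mul_assoc] using
      mem_relationSpan (L := L) (u := a :: b :: m) (v := []) hyx' (by simpa using hlt)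

theorem IsConfluent.overlap_mem (hL : L.IsConfluent) {x y z : X} (hyx : y < x) (hzy : z < y) :
    L.relator x y * wordMonomial k [z] - wordMonomial k [x] * L.relator y z ∈
      L.relationSpan {w | WordLT w [x, y, z]} := by
  convert neg_mem (hL x y z hyx hzy) using 1
  simp only [relator, wordMonomial, List.map_cons, List.map_nil, List.prod_cons, List.prod_nil]
  noncomm_ring

theorem IsConfluent.relator_sub_relator_mem_of_append (hL : L.IsConfluent) {u m v v' : List X}
    {x y x' y' : X} (hyx : y < x) (hyx' : y' < x') (h : x :: y :: v = m ++ x' :: y' :: v') :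
    wordMonomial k u * L.relator x y * wordMonomial k v -
        wordMonomial k (u ++ m) * L.relator x' y' * wordMonomial k v' ∈
      L.relationSpan {w | WordLT w (u ++ x :: y :: v)} := by
  match m with
  | [] =>
    simp only [List.nil_append, List.cons.injEq] at h
    obtain ⟨rfl, rfl, rfl⟩ := h
    simp
  | [c] =>
    simp only [List.cons_append, List.nil_append, List.cons.injEq] at h
    obtain ⟨rfl, rfl, rfl⟩ := h
    simpa [wordMonomial, mul_sub, sub_mul, mul_assoc] using
      relationSpan_context (hL.overlap_mem hyx hyx') u v'
  | c :: d :: m =>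
    simp only [List.cons_append, List.cons.injEq] at h
    obtain ⟨rfl, rfl, rfl⟩ := h
    simpa [wordMonomial, mul_sub, sub_mul, mul_assoc] using
      relationSpan_context (relator_mul_sub_mul_relator_mem (L := L) hyx hyx' m) u v'

theorem IsConfluent.relator_sub_relator_mem (hL : L.IsConfluent) {u v u' v' : List X}
    {x y x' y' : X} (hyx : y < x) (hyx' : y' < x')
    (h : u ++ x :: y :: v = u' ++ x' :: y' :: v') :
    wordMonomial k u * L.relator x y * wordMonomial k v -
        wordMonomial k u' * L.relator x' y' * wordMonomial k v' ∈
      L.relationSpan {w | WordLT w (u ++ x :: y :: v)} := by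
  rcases List.append_eq_append_iff.1 h with ⟨m, rfl, hm⟩ | ⟨m, rfl, hm⟩
  · exact hL.relator_sub_relator_mem_of_append hyx hyx' hm
  · rw [h, ← neg_sub]
    exact neg_mem (hL.relator_sub_relator_mem_of_append hyx' hyx hm)

theorem wordMonomial_sub_relator_mem {x y : X} (hyx : y < x) (u v : List X) :
    wordMonomial k (u ++ x :: y :: v) - wordMonomial k u * L.relator x y * wordMonomial k v ∈
      Submodule.span k (wordMonomial k '' {w | WordLT w (u ++ x :: y :: v)}) := by
  have : wordMonomial k (u ++ x :: y :: v) -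
      wordMonomial k u * L.relator x y * wordMonomial k v =
      wordMonomial k u * (L.rhs x y * wordMonomial k v) := by
    simp [relator, wordMonomial, mul_sub, sub_mul, mul_assoc]
  rw [this]
  refine rhs_mul_mem (N := (Submodule.span k
    (wordMonomial k '' {w | WordLT w (u ++ x :: y :: v)})).comap
      (LinearMap.mulLeft k (wordMonomial k u))) hyx fun a b hb => ?_
  refine Submodule.subset_span ⟨u ++ a :: b :: v, ?_, by simp [wordMonomial, mul_assoc]⟩
  simpa using WordLT.append_append (wordLT_pair a x hb) u v

variable (L) in
/-- A triangular change of basis of the free algebra: sorted words stand for their monomials, any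
other word for a relator in context at one of its descents. -/
def IsReducingFamily (b : List X → FreeAlgebra k X) : Prop :=
  (∀ w, w.SortedLE → b w = wordMonomial k w) ∧
  ∀ w, ¬ w.SortedLE → ∃ u x y v, y < x ∧ w = u ++ x :: y :: v ∧
    b w = wordMonomial k u * L.relator x y * wordMonomial k v

variable (L) in
theorem exists_isReducingFamily : ∃ b, L.IsReducingFamily b := by
  have h : ∀ w : List X, ∃ g : FreeAlgebra k X, (w.SortedLE → g = wordMonomial k w) ∧
      (¬ w.SortedLE → ∃ u x y v, y < x ∧ w = u ++ x :: y :: v ∧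
        g = wordMonomial k u * L.relator x y * wordMonomial k v) := by
    intro w
    by_cases hw : w.SortedLE
    · exact ⟨_, fun _ => rfl, fun h => absurd hw h⟩
    · obtain ⟨u, x, y, v, hyx, rfl⟩ := exists_descent_of_not_sortedLE hw
      exact ⟨_, fun h => absurd h hw, fun _ => ⟨u, x, y, v, hyx, rfl, rfl⟩⟩
  choose b hsorted hdescent using h
  exact ⟨b, hsorted, hdescent⟩

namespace IsReducingFamily

variable {b : List X → FreeAlgebra k X}

theorem wordBasis_sub_mem (hb : L.IsReducingFamily b) (w : List X) :
    wordBasis k w - b w ∈ Submodule.span k (wordBasis k '' {v | WordLT v w}) := by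
  simp only [wordBasis_apply]
  by_cases hw : w.SortedLE
  · simp [hb.1 w hw]
  · obtain ⟨u, x, y, v, hyx, rfl, hbw⟩ := hb.2 w hw
    rw [hbw]
    exact wordMonomial_sub_relator_mem hyx u v

variable [WellFoundedGT X]

theorem linearIndependent (hb : L.IsReducingFamily b) : LinearIndependent k b :=
  linearIndependent_of_unitriangular (wordBasis k) hb.wordBasis_sub_mem

theorem span_range_eq_top (hb : L.IsReducingFamily b) : Submodule.span k (Set.range b) = ⊤ :=
  span_eq_top_of_unitriangular (wordBasis k) hb.wordBasis_sub_mem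

theorem relationSpan_univ_le (hb : L.IsReducingFamily b) (hL : L.IsConfluent) :
    L.relationSpan Set.univ ≤ Submodule.span k (b '' {w | ¬ w.SortedLE}) := by
  suffices H : ∀ w u x y v, y < x → w = u ++ x :: y :: v →
      wordMonomial k u * L.relator x y * wordMonomial k v ∈
        Submodule.span k (b '' {w | ¬ w.SortedLE}) by
    rw [relationSpan, Submodule.span_le]
    rintro _ ⟨u, x, y, v, hyx, -, rfl⟩
    exact H _ u x y v hyx rfl
  intro w
  induction w using IsWellFounded.induction (WordLT (X := X)) with
  | ind w ih =>
    rintro u x y v hyx rfl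
    have hlower : L.relationSpan {w | WordLT w (u ++ x :: y :: v)} ≤
        Submodule.span k (b '' {w | ¬ w.SortedLE}) := by
      rw [relationSpan, Submodule.span_le]
      rintro _ ⟨u', x', y', v', hyx', hlt, rfl⟩
      exact ih (u' ++ x' :: y' :: v') hlt u' x' y' v' hyx' rfl
    have hw : ¬ (u ++ x :: y :: v).SortedLE := not_sortedLE_of_descent hyx u v
    obtain ⟨u', x', y', v', hyx', heq, hbw⟩ := hb.2 _ hw
    have hdiff := hlower (hL.relator_sub_relator_mem hyx hyx' heq)
    rw [← hbw] at hdiff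
    simpa using add_mem hdiff (Submodule.subset_span ⟨_, hw, rfl⟩)

end IsReducingFamily

variable (L) in
theorem relationSpan_univ : L.relationSpan Set.univ =
    ⊤ * Submodule.span k {g | ∃ x y, y < x ∧ L.relator x y = g} * ⊤ := by
  rw [← span_range_wordMonomial, Submodule.span_mul_span, Submodule.span_mul_span, relationSpan]
  congr 1
  ext g
  simp only [Set.mem_mul, Set.mem_range, Set.mem_ofPred_eq, Set.mem_univ, true_and]
  constructor
  · rintro ⟨u, x, y, v, hyx, rfl⟩
    exact ⟨_, ⟨_, ⟨u, rfl⟩, _, ⟨x, y, hyx, rfl⟩, rfl⟩, _, ⟨v, rfl⟩, rfl⟩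
  · rintro ⟨_, ⟨_, ⟨u, rfl⟩, _, ⟨x, y, hyx, rfl⟩, rfl⟩, _, ⟨v, rfl⟩, rfl⟩
    exact ⟨u, x, y, v, hyx, rfl⟩

variable [WellFoundedGT X]

theorem span_sortedLE_eq_top {φ : FreeAlgebra k X →ₗ[k] M} (hφ : Function.Surjective φ)
    (hker : L.relationSpan Set.univ ≤ LinearMap.ker φ) :
    Submodule.span k (Set.range fun w : {w : List X // w.SortedLE} => φ (wordMonomial k w)) =
      ⊤ := by
  obtain ⟨b, hb⟩ := L.exists_isReducingFamily
  rw [eq_top_iff, ← LinearMap.range_eq_top.2 hφ, LinearMap.range_eq_map, ← hb.span_range_eq_top,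
    Submodule.map_span_le]
  rintro _ ⟨w, rfl⟩
  by_cases hw : w.SortedLE
  · exact Submodule.subset_span ⟨⟨w, hw⟩, by rw [hb.1 w hw]⟩
  · obtain ⟨u, x, y, v, hyx, -, hbw⟩ := hb.2 w hw
    have : φ (b w) = 0 := hbw ▸ hker (mem_relationSpan hyx (Set.mem_univ _))
    exact this ▸ zero_mem _

theorem IsConfluent.linearIndependent_sortedLE (hL : L.IsConfluent) {φ : FreeAlgebra k X →ₗ[k] M}
    (hker : LinearMap.ker φ ≤ L.relationSpan Set.univ) :
    LinearIndependent k fun w : {w : List X // w.SortedLE} => φ (wordMonomial k w) := by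
  obtain ⟨b, hb⟩ := L.exists_isReducingFamily
  have hdisj : Disjoint (Submodule.span k (b '' {w | w.SortedLE})) (LinearMap.ker φ) :=
    (hb.linearIndependent.disjoint_span_image disjoint_compl_right).mono_right
      (hker.trans (hb.relationSpan_univ_le hL))
  rw [Set.image_eq_range] at hdisj
  have hφb : (fun w : {w : List X // w.SortedLE} => φ (wordMonomial k w)) =
      φ ∘ (b ∘ Subtype.val) :=
    funext fun w => congrArg φ (hb.1 w w.2).symm
  rw [hφb]
  exact (hb.linearIndependent.comp _ Subtype.val_injective).map hdisj

end StraighteningLaw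

section RingQuotKernel

variable {k A : Type*} [CommRing k] [Ring A] [Algebra k A] (r : A → A → Prop)

theorem mem_span_of_mkRingHom_eq_zero {g : A} (hg : RingQuot.mkRingHom r g = 0) :
    g ∈ TwoSidedIdeal.span {g | ∃ a b, r a b ∧ a - b = g} := by
  let I := TwoSidedIdeal.span {g | ∃ a b, r a b ∧ a - b = g}
  have hr : ∀ ⦃a b⦄, r a b → I.ringCon.mk' a = I.ringCon.mk' b := fun a b hab =>
    (RingCon.eq _).2 ((I.rel_iff a b).2 (TwoSidedIdeal.subset_span ⟨a, b, hab, rfl⟩))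
  have hzero : I.ringCon.mk' g = I.ringCon.mk' 0 := by
    rw [← RingQuot.lift_mkRingHom_apply I.ringCon.mk' hr, hg, map_zero, map_zero]
  exact (I.mem_iff g).2 ((RingCon.eq _).1 hzero)

theorem ker_mkAlgHom :
    LinearMap.ker (RingQuot.mkAlgHom k r).toLinearMap =
      ⊤ * Submodule.span k {g | ∃ a b, r a b ∧ a - b = g} * ⊤ := by
  apply le_antisymm
  · intro g hg
    have hg0 : RingQuot.mkRingHom r g = 0 := by
      rw [← RingQuot.mkAlgHom_coe k r]
      exact hg
    have hmem := mem_span_of_mkRingHom_eq_zero r hg0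
    rw [TwoSidedIdeal.mem_span_iff_mem_addSubgroup_closure] at hmem
    refine (AddSubgroup.closure_le
      (⊤ * Submodule.span k _ * ⊤ : Submodule k A).toAddSubgroup).2 ?_ hmem
    rintro _ ⟨_, ⟨a, -, g, hg, rfl⟩, b, -, rfl⟩
    exact Submodule.mul_mem_mul (Submodule.mul_mem_mul Submodule.mem_top
      (Submodule.subset_span hg)) Submodule.mem_top
  · have hspan : Submodule.span k {g | ∃ a b, r a b ∧ a - b = g} ≤
        LinearMap.ker (RingQuot.mkAlgHom k r).toLinearMap := by
      rw [Submodule.span_le]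
      rintro _ ⟨a, b, hab, rfl⟩
      simpa [sub_eq_zero] using RingQuot.mkAlgHom_rel k hab
    rw [LinearMap.le_ker_iff_map, Submodule.map_mul, Submodule.map_mul,
      LinearMap.le_ker_iff_map.1 hspan, Submodule.mul_bot, Submodule.bot_mul]

end RingQuotKernel

/-- The order `a¹₁ < a¹₂ < a²₁ < a²₂ < ∂¹₁ < ∂¹₂ < ∂²₁ < ∂²₂`. -/
instance : LinearOrder QGen :=
  LinearOrder.lift' QGen.ctorIdx fun x y h => by cases x <;> cases y <;> first | rfl | cases h

instance : Finite QGen :=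
  Finite.of_surjective ![QGen.a11, .a12, .a21, .a22, .p11, .p12, .p21, .p22] fun x => by
    cases x
    exacts [⟨0, rfl⟩, ⟨1, rfl⟩, ⟨2, rfl⟩, ⟨3, rfl⟩, ⟨4, rfl⟩, ⟨5, rfl⟩, ⟨6, rfl⟩, ⟨7, rfl⟩]

/-- The right-hand sides of the straightening rules of `𝒟q⁺(GL₂)`. They are the defining relations
with the descents on their right-hand sides, such as `∂¹₂a²₁` in the relation for `∂¹₁a¹₁`, in turn
rewritten until none is left. -/
def straighteningRhs (q : ℂ) : QGen → QGen → FQ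
  | .a12, .a11 => gQ .a11 * gQ .a12 + (1 - q⁻¹ ^ 2) • (gQ .a12 * gQ .a22)
  | .a22, .a11 => gQ .a11 * gQ .a22
  | .a21, .a11 => gQ .a11 * gQ .a21 - (q⁻¹ ^ 2 * (1 - q⁻¹ ^ 2)) • (gQ .a21 * gQ .a22)
  | .a22, .a12 => q ^ 2 • (gQ .a12 * gQ .a22)
  | .a21, .a12 => gQ .a12 * gQ .a21 + (1 - q⁻¹ ^ 2) • (gQ .a11 * gQ .a22 - gQ .a22 * gQ .a22)
  | .a22, .a21 => q⁻¹ ^ 2 • (gQ .a21 * gQ .a22)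
  | .p12, .p11 => gQ .p11 * gQ .p12 + (1 - q⁻¹ ^ 2) • (gQ .p12 * gQ .p22)
  | .p22, .p11 => gQ .p11 * gQ .p22
  | .p21, .p11 => gQ .p11 * gQ .p21 - (q⁻¹ ^ 2 * (1 - q⁻¹ ^ 2)) • (gQ .p21 * gQ .p22)
  | .p22, .p12 => q ^ 2 • (gQ .p12 * gQ .p22)
  | .p21, .p12 => gQ .p12 * gQ .p21 + (1 - q⁻¹ ^ 2) • (gQ .p11 * gQ .p22 - gQ .p22 * gQ .p22)
  | .p22, .p21 => q⁻¹ ^ 2 • (gQ .p21 * gQ .p22)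
  | .p11, .a11 => q⁻¹ ^ 2 • (gQ .a11 * gQ .p11)
      + (1 - q⁻¹ ^ 2) ^ 2 • (gQ .a11 * gQ .p22 + gQ .a22 * gQ .p11 - gQ .a22 * gQ .p22)
      + (3 - q ^ 2 - 2 * q⁻¹ ^ 2) • (gQ .a12 * gQ .p21) - (1 - q⁻¹ ^ 2) • (gQ .a21 * gQ .p12)
  | .p11, .a12 => q⁻¹ ^ 2 • (gQ .a12 * gQ .p11) + (1 - q⁻¹ ^ 2) ^ 2 • (gQ .a12 * gQ .p22)
      - (q⁻¹ ^ 2 * (1 - q⁻¹ ^ 2)) • (gQ .a22 * gQ .p12)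
  | .p11, .a21 => gQ .a21 * gQ .p11 + (1 - q⁻¹ ^ 2) • (gQ .a22 * gQ .p21 - gQ .a11 * gQ .p21)
  | .p11, .a22 => gQ .a22 * gQ .p11 + (1 - q ^ 2) • (gQ .a12 * gQ .p21)
  | .p12, .a11 => gQ .a11 * gQ .p12 + (1 - q⁻¹ ^ 2) • (gQ .a12 * gQ .p22 - gQ .a12 * gQ .p11)
  | .p12, .a12 => q⁻¹ ^ 2 • (gQ .a12 * gQ .p12)
  | .p12, .a21 => gQ .a21 * gQ .p12 + (q - q⁻¹) ^ 2 • (gQ .a12 * gQ .p21)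
      + (1 - q⁻¹ ^ 2) • (gQ .a22 * gQ .p22 - gQ .a11 * gQ .p22 - gQ .a22 * gQ .p11)
  | .p12, .a22 => q⁻¹ ^ 2 • (gQ .a22 * gQ .p12) - (1 - q⁻¹ ^ 2) • (gQ .a12 * gQ .p22)
  | .p21, .a11 => q⁻¹ ^ 2 • (gQ .a11 * gQ .p21) + (1 - q⁻¹ ^ 2) ^ 2 • (gQ .a22 * gQ .p21)
      - (q⁻¹ ^ 2 * (1 - q⁻¹ ^ 2)) • (gQ .a21 * gQ .p22)
  | .p21, .a12 => gQ .a12 * gQ .p21 - (q⁻¹ ^ 2 * (1 - q⁻¹ ^ 2)) • (gQ .a22 * gQ .p22)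
  | .p21, .a21 => q⁻¹ ^ 2 • (gQ .a21 * gQ .p21)
  | .p21, .a22 => gQ .a22 * gQ .p21
  | .p22, .a11 => gQ .a11 * gQ .p22 + (1 - q ^ 2) • (gQ .a12 * gQ .p21)
  | .p22, .a12 => gQ .a12 * gQ .p22
  | .p22, .a21 => q⁻¹ ^ 2 • (gQ .a21 * gQ .p22) - (1 - q⁻¹ ^ 2) • (gQ .a22 * gQ .p21)
  | .p22, .a22 => q⁻¹ ^ 2 • (gQ .a22 * gQ .p22)
  | _, _ => 0

section RelationsAndRules

variable {q : ℂ} {V : Type*} [AddCommGroup V] [Module ℂ V] {φ : FQ →ₗ[ℂ] V}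

theorem map_eq_map_of_qRel (hq : q ≠ 0)
    (h : ∀ x y, y < x → φ (gQ x * gQ y) = φ (straighteningRhs q x y)) {a b : FQ}
    (hab : QRel q a b) : φ a = φ b := by
  cases hab
  all_goals
    simp (discharger := decide) only [map_add, map_sub, map_neg, map_smul, h, straighteningRhs]
  all_goals match_scalars <;> first | ring1 | (field_simp; ring1)

theorem map_mul_eq_map_straighteningRhs (hq : q ≠ 0) (h : ∀ a b, QRel q a b → φ a = φ b)
    {x y : QGen} (hyx : y < x) : φ (gQ x * gQ y) = φ (straighteningRhs q x y) := by
  cases x <;> cases y <;> first | exact absurd hyx (by decide) | skip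
  all_goals
    simp only [straighteningRhs, map_add, map_sub, map_neg, map_smul,
      h _ _ .a1, h _ _ .a2, h _ _ .a3, h _ _ .a4, h _ _ .a5, h _ _ .a6,
      h _ _ .p1, h _ _ .p2, h _ _ .p3, h _ _ .p4, h _ _ .p5, h _ _ .p6,
      h _ _ .c1, h _ _ .c2, h _ _ .c3, h _ _ .c4, h _ _ .c5, h _ _ .c6, h _ _ .c7, h _ _ .c8,
      h _ _ .c9, h _ _ .c10, h _ _ .c11, h _ _ .c12, h _ _ .c13, h _ _ .c14, h _ _ .c15,
      h _ _ .c16]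
  all_goals match_scalars <;> first | ring1 | (field_simp; ring1)

end RelationsAndRules

theorem wordMonomial_pair (x y : QGen) : wordMonomial ℂ [x, y] = gQ x * gQ y := by
  simp [wordMonomial, gQ]

theorem wordMonomial_singleton (x : QGen) : wordMonomial ℂ [x] = gQ x := by
  simp [wordMonomial, gQ]

/-- The straightening law of `𝒟q⁺(GL₂)`. -/
def straightening (q : ℂ) : StraighteningLaw ℂ QGen where
  rhs := straighteningRhs q
  rhs_mem {x y} hyx := by
    have hpair (a b : QGen) (hb : y < b) : gQ a * gQ b ∈
        Submodule.span ℂ {m | ∃ a b, y < b ∧ wordMonomial ℂ [a, b] = m} :=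
      Submodule.subset_span ⟨a, b, hb, wordMonomial_pair a b⟩
    cases x <;> cases y <;> first | exact absurd hyx (by decide) | skip
    all_goals
      unfold straighteningRhs
      repeat' first
        | exact hpair _ _ (by decide)
        | apply add_mem
        | apply sub_mem
        | apply Submodule.smul_mem

theorem span_straightening_relator {q : ℂ} (hq : q ≠ 0) :
    Submodule.span ℂ {g | ∃ x y, y < x ∧ (straightening q).relator x y = g} =
      Submodule.span ℂ {g | ∃ a b, QRel q a b ∧ a - b = g} := by
  apply le_antisymm <;> rw [Submodule.span_le]
  · rintro _ ⟨x, y, hyx, rfl⟩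
    refine (Submodule.Quotient.eq _).1 ?_
    rw [wordMonomial_pair]
    refine map_mul_eq_map_straighteningRhs (φ := Submodule.mkQ _) hq (fun a b hab => ?_) hyx
    exact (Submodule.Quotient.eq _).2 (Submodule.subset_span ⟨a, b, hab, rfl⟩)
  · rintro _ ⟨a, b, hab, rfl⟩
    refine (Submodule.Quotient.eq _).1 (map_eq_map_of_qRel (φ := Submodule.mkQ _) hq ?_ hab)
    intro x y hyx
    rw [← wordMonomial_pair]
    refine (Submodule.Quotient.eq _).2 (Submodule.subset_span ?_)
    exact ⟨x, y, hyx, rfl⟩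

theorem ker_mkAlgHom_qRel {q : ℂ} (hq : q ≠ 0) :
    LinearMap.ker (RingQuot.mkAlgHom ℂ (QRel q)).toLinearMap =
      (straightening q).relationSpan Set.univ := by
  rw [ker_mkAlgHom, StraighteningLaw.relationSpan_univ, span_straightening_relator hq]

set_option maxHeartbeats 1600000 in
-- Each of the 56 overlaps is a separate computation.
theorem map_straighteningRhs_mul_eq {V : Type*} [AddCommGroup V] [Module ℂ V] {q : ℂ} (hq : q ≠ 0)
    (φ : FQ →ₗ[ℂ] V) (x y z : QGen)
    (hfst : ∀ a b c, (z < c ∨ z = c ∧ y < b) → b < a →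
      φ (gQ a * (gQ b * gQ c)) = φ (straighteningRhs q a b * gQ c))
    (hsnd : ∀ a b c, (z < c ∨ z = c ∧ y < b) → c < b →
      φ (gQ a * (gQ b * gQ c)) = φ (gQ a * straighteningRhs q b c))
    (hyx : y < x) (hzy : z < y) :
    φ (straighteningRhs q x y * gQ z) = φ (gQ x * straighteningRhs q y z) := by
  cases z <;> cases y <;> first | exact absurd hzy (by decide) | skip
  all_goals cases x <;> first | exact absurd hyx (by decide) | skip
  all_goals
    simp (discharger := decide) only [hfst, hsnd, straighteningRhs, add_mul, sub_mul, mul_add,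
      mul_sub, mul_assoc, smul_mul_assoc, mul_smul_comm, smul_add, smul_sub, smul_smul, map_add,
      map_sub, map_smul]
  all_goals
    clear hfst hsnd
    match_scalars <;> first | ring1 | (field_simp <;> ring1)

theorem straightening_isConfluent {q : ℂ} (hq : q ≠ 0) : (straightening q).IsConfluent := by
  intro x y z hyx hzy
  rw [wordMonomial_singleton, wordMonomial_singleton]
  refine (Submodule.Quotient.eq _).1 (map_straighteningRhs_mul_eq hq (Submodule.mkQ _) x y z
    (fun a b c h hba => (Submodule.Quotient.eq _).2 ?_)
    (fun a b c h hcb => (Submodule.Quotient.eq _).2 ?_) hyx hzy)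
  · simpa [StraighteningLaw.relator, wordMonomial, straightening, gQ, sub_mul, mul_assoc] using
      StraighteningLaw.mem_relationSpan (L := straightening q) (u := []) (v := [c]) hba
        (wordLT_triple a x h)
  · simpa [StraighteningLaw.relator, wordMonomial, straightening, gQ, mul_sub, mul_assoc] using
      StraighteningLaw.mem_relationSpan (L := straightening q) (u := [a]) (v := []) hcb
        (wordLT_triple a x h)

/-- The sorted word with prescribed multiplicities of the eight generators. -/
def sortedWord (e : (ℕ × ℕ × ℕ × ℕ) × (ℕ × ℕ × ℕ × ℕ)) : List QGen :=
  List.replicate e.1.1 .a11 ++ List.replicate e.1.2.1 .a12 ++ List.replicate e.1.2.2.1 .a21 ++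
    List.replicate e.1.2.2.2 .a22 ++ (List.replicate e.2.1 .p11 ++ List.replicate e.2.2.1 .p12 ++
      List.replicate e.2.2.2.1 .p21 ++ List.replicate e.2.2.2.2 .p22)

theorem sortedLE_sortedWord (e : (ℕ × ℕ × ℕ × ℕ) × (ℕ × ℕ × ℕ × ℕ)) :
    (sortedWord e).SortedLE := by
  rw [List.sortedLE_iff_pairwise]
  simp +contextual (decide := true) only [sortedWord, List.pairwise_append, List.pairwise_replicate,
    List.mem_append, List.mem_replicate, or_imp, forall_and, implies_true, and_self, or_true]

/-- Exponent vectors as sorted words; the inverse counts occurrences of each generator. -/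
def sortedWordEquiv : ((ℕ × ℕ × ℕ × ℕ) × (ℕ × ℕ × ℕ × ℕ)) ≃ {w : List QGen // w.SortedLE} where
  toFun e := ⟨sortedWord e, sortedLE_sortedWord e⟩
  invFun w := ((w.1.count .a11, w.1.count .a12, w.1.count .a21, w.1.count .a22),
    (w.1.count .p11, w.1.count .p12, w.1.count .p21, w.1.count .p22))
  left_inv e := by simp [sortedWord, List.count_replicate]
  right_inv w := by
    refine Subtype.ext (List.Perm.eq_of_sortedLE (sortedLE_sortedWord _) w.2 ?_)
    rw [List.perm_iff_count]
    rintro (_ | _ | _ | _ | _ | _ | _ | _) <;> simp [sortedWord, List.count_replicate]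

theorem mkAlgHom_wordMonomial_sortedWord (q : ℂ) (e : (ℕ × ℕ × ℕ × ℕ) × (ℕ × ℕ × ℕ × ℕ)) :
    RingQuot.mkAlgHom ℂ (QRel q) (wordMonomial ℂ (sortedWord e)) = pbwDq q e := by
  simp [sortedWord, wordMonomial, pbwDq, a11, a12, a21, a22, p11, p12, p21, p22, gQ, mul_assoc]

theorem pbwDq_eq_comp_sortedWordEquiv (q : ℂ) :
    pbwDq q = (fun w : {w : List QGen // w.SortedLE} =>
      (RingQuot.mkAlgHom ℂ (QRel q)).toLinearMap (wordMonomial ℂ w)) ∘ sortedWordEquiv :=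
  funext fun e => (mkAlgHom_wordMonomial_sortedWord q e).symm

/-- The ordered monomials
`a^{i₁}_{j₁}⋯a^{i_m}_{j_m}∂^{k₁}_{l₁}⋯∂^{k_n}_{l_n}`, with weakly lexicographically
increasing index sequences, form a ℂ-vector-space basis of `𝒟q⁺(GL₂)`. -/
theorem stmt13 (q : ℂ) (hq : q ≠ 0) :
    LinearIndependent ℂ (pbwDq q) ∧
      Submodule.span ℂ (Set.range (pbwDq q)) = ⊤ := by
  have hker := ker_mkAlgHom_qRel hq
  rw [pbwDq_eq_comp_sortedWordEquiv, linearIndependent_equiv, sortedWordEquiv.surjective.range_comp]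
  exact ⟨(straightening_isConfluent hq).linearIndependent_sortedLE hker.le,
    StraighteningLaw.span_sortedLE_eq_top (RingQuot.mkAlgHom_surjective ℂ (QRel q)) hker.ge⟩
end
end

section
/- The family of monomials c₁^{a₁}c₂^{a₂}r^{ε}d₁^{b₁}d₂^{b₂}w^{c}, with a₁, b₁, c ∈ ℕ₀, a₂, b₂ ∈ ℤ (negative exponents interpreted via the inverse generators) and ε ∈ {0,1}, is a ℂ-vector-space basis of ℬ; moreover, the monomials of this form with all exponents in ℕ₀ form a ℂ-vector-space basis of the subalgebra ℬ⁺ of ℬ generated by c₁, c₂, d₁, d₂, r, w. -/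
noncomputable section

/-- Generators of the algebra `ℬ`: `c₁, c₂, c₂⁻¹, d₁, d₂, d₂⁻¹, r, w`. -/
inductive BGen : Type
  | c1 | c2 | c2i | d1 | d2 | d2i | r | w

abbrev FB : Type := FreeAlgebra ℂ BGen

def gB : BGen → FB := FreeAlgebra.ι ℂ

/-- The defining relations of the algebra `ℬ`. -/
inductive BRel (q : ℂ) : FB → FB → Prop
  | c2c2i : BRel q (gB .c2 * gB .c2i) 1
  | c2ic2 : BRel q (gB .c2i * gB .c2) 1
  | d2d2i : BRel q (gB .d2 * gB .d2i) 1
  | d2id2 : BRel q (gB .d2i * gB .d2) 1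
  | c2c1 : BRel q (gB .c2 * gB .c1) (gB .c1 * gB .c2)
  | d2d1 : BRel q (gB .d2 * gB .d1) (gB .d1 * gB .d2)
  | d2c2 : BRel q (gB .d2 * gB .c2) ((q⁻¹ ^ 4) • (gB .c2 * gB .d2))
  | d2c1 : BRel q (gB .d2 * gB .c1) ((q⁻¹ ^ 2) • (gB .c1 * gB .d2))
  | d1c2 : BRel q (gB .d1 * gB .c2) ((q⁻¹ ^ 2) • (gB .c2 * gB .d1))
  | d1c1 : BRel q (gB .d1 * gB .c1) (gB .c1 * gB .d1 + (q⁻¹ ^ 2 - 1) • gB .r)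
  | d2r : BRel q (gB .d2 * gB .r) ((q⁻¹ ^ 2) • (gB .r * gB .d2))
  | rc2 : BRel q (gB .r * gB .c2) ((q⁻¹ ^ 2) • (gB .c2 * gB .r))
  | d1r : BRel q (gB .d1 * gB .r)
      ((q⁻¹ ^ 2) • (gB .r * gB .d1) + ((1 - q⁻¹ ^ 2) * q⁻¹ ^ 2) • (gB .c1 * gB .d2))
  | rc1 : BRel q (gB .r * gB .c1)
      ((q⁻¹ ^ 2) • (gB .c1 * gB .r) + ((1 - q⁻¹ ^ 2) * q⁻¹ ^ 2) • (gB .c2 * gB .d1))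
  | rr : BRel q (gB .r * gB .r)
      ((q⁻¹ ^ 4) • gB .w + (q⁻¹ ^ 4 + q⁻¹ ^ 6) • (gB .c2 * gB .d2)
        - (q⁻¹ ^ 4) • (gB .c2 * gB .d1 * gB .d1)
        - (q⁻¹ ^ 4) • (gB .c1 * gB .c1 * gB .d2)
        + (q⁻¹ ^ 2) • (gB .c1 * gB .r * gB .d1))
  | wr : BRel q (gB .w * gB .r) (gB .r * gB .w)
  | wc1 : BRel q (gB .w * gB .c1) ((q⁻¹ ^ 2) • (gB .c1 * gB .w))
  | wc2 : BRel q (gB .w * gB .c2) ((q⁻¹ ^ 4) • (gB .c2 * gB .w))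
  | wd1 : BRel q (gB .w * gB .d1) ((q ^ 2) • (gB .d1 * gB .w))
  | wd2 : BRel q (gB .w * gB .d2) ((q ^ 4) • (gB .d2 * gB .w))

/-- The algebra `ℬ`. -/
abbrev AlgB (q : ℂ) : Type := RingQuot (BRel q)

def bc1 (q : ℂ) : AlgB q := RingQuot.mkAlgHom ℂ (BRel q) (gB .c1)
def bc2 (q : ℂ) : AlgB q := RingQuot.mkAlgHom ℂ (BRel q) (gB .c2)
def bc2i (q : ℂ) : AlgB q := RingQuot.mkAlgHom ℂ (BRel q) (gB .c2i)
def bd1 (q : ℂ) : AlgB q := RingQuot.mkAlgHom ℂ (BRel q) (gB .d1)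
def bd2 (q : ℂ) : AlgB q := RingQuot.mkAlgHom ℂ (BRel q) (gB .d2)
def bd2i (q : ℂ) : AlgB q := RingQuot.mkAlgHom ℂ (BRel q) (gB .d2i)
def br (q : ℂ) : AlgB q := RingQuot.mkAlgHom ℂ (BRel q) (gB .r)
def bw (q : ℂ) : AlgB q := RingQuot.mkAlgHom ℂ (BRel q) (gB .w)

/-- Integer powers of an element `x` with designated inverse `xi`:
negative exponents are interpreted via the inverse generator. -/
def zp {M : Type*} [Monoid M] (x xi : M) : ℤ → M
  | Int.ofNat n => x ^ n
  | Int.negSucc n => xi ^ (n + 1)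

/-- The PBW family `c₁^{a₁}c₂^{a₂}r^{ε}d₁^{b₁}d₂^{b₂}w^{c}` of `ℬ`, indexed by
`a₁, b₁, c ∈ ℕ`, `a₂, b₂ ∈ ℤ`, `ε ∈ {0,1}`. -/
def pbwB (q : ℂ) : ℕ × ℤ × Fin 2 × ℕ × ℤ × ℕ → AlgB q :=
  fun x => bc1 q ^ x.1 * zp (bc2 q) (bc2i q) x.2.1 * br q ^ (x.2.2.1 : ℕ) *
    bd1 q ^ x.2.2.2.1 * zp (bd2 q) (bd2i q) x.2.2.2.2.1 * bw q ^ x.2.2.2.2.2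

/-- The PBW family of the subalgebra `ℬ⁺`, with all exponents in `ℕ₀`. -/
def pbwBplus (q : ℂ) : ℕ × ℕ × Fin 2 × ℕ × ℕ × ℕ → AlgB q :=
  fun x => bc1 q ^ x.1 * bc2 q ^ x.2.1 * br q ^ (x.2.2.1 : ℕ) *
    bd1 q ^ x.2.2.2.1 * bd2 q ^ x.2.2.2.2.1 * bw q ^ x.2.2.2.2.2

/-!
The commutation relations bring every product to the ordered form up to terms that are again
ordered. Let `S` be the span of the ordered monomials. It is stable under left multiplication by
`c₁`, by the powers of `c₂` and `d₂` and by `w`, since these move into place at the cost of a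
power of `q`. For `r` and `d₁`, consider all `s ∈ S` with `r s ∈ S` and `d₁ s ∈ S`: by the relations
for `r²` and `d₁ r` they include the monomials not involving `c₁` and `c₂`, and by the relations for
`r c₁` and `d₁ c₁` they are stable under `c₁` and `c₂`, so they exhaust `S`.

For independence, `ℬ` is `ℤ²`-graded by `c₁ : (1,0)`, `c₂ : (2,0)`, `r : (1,1)`, `d₁ : (0,1)`,
`d₂ : (0,2)`, `w : (2,2)`, and letting degree `(i,j)` act on functions `ℤ → V` with an additional
factor `q ^ (i n)` and shift by `j` turns `c₂`, `d₂`, `w` into commuting scalars. What remains are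
three operators `x`, `r`, `δ` over the ring of parameters `c^{±1}, y, d^{±1}, w`. They are realized
on a module of Verma type, with basis `xⁿ e`, `xⁿ r e`, generated by a vector `e` with `δ e = y e`.
Up to nonzero constants the ordered monomials send `e` to the distinct products of a monomial in
the parameters with a basis vector.
-/

/-! ### Skew pairs and a module of Verma type -/

section
variable {A E : Type*} [CommRing A] [Ring E] [Algebra A E]

/-- The relations for moving `δ` and `r` past `x`, with parameters `p = q⁻¹` and `c`: what the
relations `d₁c₁` and `rc₁` of `ℬ` become after twisting, when `c₂` is a scalar `c`. -/
structure SkewPair (q p c : A) (x r δ : E) : Prop where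
  δ_mul_x : δ * x = q • (x * δ) + (p - q) • r
  r_mul_x : r * x = p • (x * r) + ((p - p ^ 3) * c) • δ

/-- The relations among `c₁`, `r`, `d₁` (written `x`, `r`, `δ`) once `c₂`, `d₂`, `w` have become
scalars `c`, `d`, `w`; here `p = q⁻¹`. The exponents of `q` differ from those of `ℬ` by the
cocycle of `twist_mul`. -/
structure StraightenedRel (q p c d w : A) (x r δ : E) : Prop extends SkewPair q p c x r δ where
  δ_mul_r : δ * r = p • (r * δ) + ((p - p ^ 3) * d) • x
  r_mul_r : r * r = (p ^ 3 * w + (p ^ 3 + p ^ 5) * (c * d)) • 1 - (p ^ 3 * c) • (δ * δ)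
    - (p ^ 3 * d) • (x * x) + p • (x * r * δ)

namespace SkewPair
variable {q p c : A} {x r δ : E}

theorem δ_mul_x_mul (h : SkewPair q p c x r δ) (v : E) :
    δ * (x * v) = q • (x * (δ * v)) + (p - q) • (r * v) := by
  simp only [← mul_assoc, h.δ_mul_x, add_mul, smul_mul_assoc]

theorem r_mul_x_mul (h : SkewPair q p c x r δ) (v : E) :
    r * (x * v) = p • (x * (r * v)) + ((p - p ^ 3) * c) • (δ * v) := by
  simp only [← mul_assoc, h.r_mul_x, add_mul, smul_mul_assoc]

theorem commute_qCommutator (h : SkewPair q p c x r δ) (hqp : q * p = 1) :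
    Commute (δ * r - p • (r * δ)) x := by
  simp only [Commute, SemiconjBy, sub_mul, mul_sub, smul_mul_assoc, mul_smul_comm, mul_assoc,
    h.δ_mul_x, h.r_mul_x, h.δ_mul_x_mul, h.r_mul_x_mul, mul_add]
  match_scalars <;> grind

theorem commute_qCasimir (h : SkewPair q p c x r δ) (hqp : q * p = 1) :
    Commute (r * r + (p ^ 3 * c) • (δ * δ) - p • (x * r * δ)) x := by
  simp only [Commute, SemiconjBy, sub_mul, mul_sub, smul_mul_assoc, mul_smul_comm, mul_assoc,
    h.δ_mul_x, h.r_mul_x, h.δ_mul_x_mul, h.r_mul_x_mul, mul_add, add_mul]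
  match_scalars <;> grind

end SkewPair

end

section PolynomialModels

open Polynomial

section SkewExtension
variable {A ι κ N : Type*} [CommRing A] [Fintype ι] [DecidableEq ι] [Fintype κ]
  [AddCommGroup N] [Module A N] [Module A[X] N] [IsScalarTower A A[X] N]

/-- The `A`-linear maps `f i` with values `B i j` on the standard basis of `A[X]^κ` and
`f i (X • v) = ∑ k, M i k • f k v`, so that on `a • eⱼ` they are given by the matrix `a(M)`. -/
def skewExtension (M : Matrix ι ι A[X]) (B : ι → κ → N) (i : ι) : (κ → A[X]) →ₗ[A] N where
  toFun v := ∑ j, ∑ k, aeval M (v j) i k • B k j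
  map_add' u v := by simp [add_smul, Finset.sum_add_distrib]
  map_smul' a v := by simp [Finset.smul_sum]

variable (M : Matrix ι ι A[X]) (B : ι → κ → N)

theorem skewExtension_X_smul (i : ι) (v : κ → A[X]) :
    skewExtension M B i ((X : A[X]) • v) = ∑ k, M i k • skewExtension M B k v := by
  simp only [skewExtension, LinearMap.coe_mk, AddHom.coe_mk, Pi.smul_apply, smul_eq_mul, map_mul,
    aeval_X, Matrix.mul_apply, Finset.sum_smul, Finset.smul_sum, smul_smul]
  exact Finset.sum_comm_cycle

theorem skewExtension_single [DecidableEq κ] (i : ι) (j : κ) :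
    skewExtension M B i (Pi.single j 1) = B i j := by
  change ∑ j', ∑ k, aeval M (Pi.single (M := fun _ => A[X]) j 1 j') i k • B k j' = B i j
  rw [Fintype.sum_eq_single j fun j' hj => by simp [hj]]
  simp [Matrix.one_apply]

end SkewExtension

section VermaModule
variable {A : Type*} [CommRing A]

variable (A) in
/-- Multiplication by `X` on `A[X]^κ`, the action of `x`. -/
abbrev mulX (κ : Type*) : Module.End A (κ → A[X]) := Algebra.lsmul A A (κ → A[X]) (X : A[X])

theorem mulX_pow_apply {κ : Type*} (n : ℕ) (v : κ → A[X]) :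
    (mulX A κ ^ n) v = (X : A[X]) ^ n • v := by
  rw [mulX, ← map_pow, Algebra.lsmul_coe]

theorem eq_of_commute_mulX {κ : Type*} [Finite κ] [DecidableEq κ] {S T : Module.End A (κ → A[X])}
    (hS : Commute S (mulX A κ)) (hT : Commute T (mulX A κ))
    (h : ∀ j, S (Pi.single j 1) = T (Pi.single j 1)) : S = T := by
  refine LinearMap.pi_ext' fun j => Polynomial.lhom_ext' fun n => LinearMap.ext_ring ?_
  have hmonomial : LinearMap.single A (fun _ : κ => A[X]) j (monomial n 1) =
      (mulX A κ ^ n) (Pi.single j 1) := by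
    simp [mulX_pow_apply, ← Pi.single_smul, X_pow_eq_monomial]
  calc S _ = (S * mulX A κ ^ n) (Pi.single j 1) := congrArg S hmonomial
    _ = (mulX A κ ^ n) (T (Pi.single j 1)) := by rw [(hS.pow_right n).eq, Module.End.mul_apply, h]
    _ = (T * mulX A κ ^ n) (Pi.single j 1) := by rw [(hT.pow_right n).eq, Module.End.mul_apply]
    _ = T _ := congrArg T hmonomial.symm

/-- The matrix for which `skewExtension` produces a `SkewPair`; index `0` stands for `r` and `1` for
`δ`. -/
def skewMatrix (q p c : A) : Matrix (Fin 2) (Fin 2) A[X] :=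
  !![C p * X, C ((p - p ^ 3) * c); C (p - q), C q * X]

theorem skewPair_skewExtension {κ : Type*} [Fintype κ] (q p c : A)
    (B : Fin 2 → κ → (κ → A[X])) :
    SkewPair q p c (mulX A κ) (skewExtension (skewMatrix q p c) B 0)
      (skewExtension (skewMatrix q p c) B 1) := by
  have hC (a : A) (v : κ → A[X]) : (C a : A[X]) • v = a • v := by
    rw [← algebraMap_eq, algebraMap_smul]
  have hCX (a : A) (v : κ → A[X]) : (C a * X : A[X]) • v = a • (X : A[X]) • v := by
    rw [mul_smul, hC]
  constructor <;> ext1 v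
  · have h := skewExtension_X_smul (skewMatrix q p c) B 1 v
    simp only [Fin.sum_univ_two, skewMatrix, Matrix.of_apply, Matrix.cons_val_zero,
      Matrix.cons_val_one, hC, hCX] at h
    exact h.trans (add_comm _ _)
  · have h := skewExtension_X_smul (skewMatrix q p c) B 0 v
    simp only [Fin.sum_univ_two, skewMatrix, Matrix.of_apply, Matrix.cons_val_zero,
      Matrix.cons_val_one, hC, hCX] at h
    exact h

/-- `e` is an eigenvector of `δ` with eigenvalue `y` on which `δ r` and `r²` act as the relations
`StraightenedRel` prescribe: the generator of a module of Verma type. -/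
structure IsVermaVector {V : Type*} [AddCommGroup V] [Module A V] (p c d w y : A)
    (x r δ : Module.End A V) (e : V) : Prop where
  δ_apply : δ e = y • e
  δ_r_apply : δ (r e) = ((p - p ^ 3) * d) • x e + (p * y) • r e
  r_r_apply : r (r e) = (p ^ 3 * w + (p ^ 3 + p ^ 5) * (c * d) - p ^ 3 * c * y ^ 2) • e
    - (p ^ 3 * d) • x (x e) + (p * y) • x (r e)

namespace IsVermaVector
variable {V : Type*} [AddCommGroup V] [Module A V] {q p c d w y : A}
  {x r δ : Module.End A V} {e : V}

theorem qCommutator_apply (he : IsVermaVector p c d w y x r δ e) :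
    (δ * r - p • (r * δ)) e = (((p - p ^ 3) * d) • x) e := by
  simp only [Module.End.mul_apply, LinearMap.sub_apply, LinearMap.smul_apply, map_smul,
    he.δ_apply, he.δ_r_apply]
  module

theorem qCasimir_apply (he : IsVermaVector p c d w y x r δ e) :
    (r * r + (p ^ 3 * c) • (δ * δ) - p • (x * r * δ)) e =
      ((p ^ 3 * w + (p ^ 3 + p ^ 5) * (c * d)) • (1 : Module.End A V)
        - (p ^ 3 * d) • (x * x)) e := by
  simp only [Module.End.mul_apply, LinearMap.sub_apply, LinearMap.add_apply, LinearMap.smul_apply,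
    map_smul, he.δ_apply, he.r_r_apply, Module.End.one_apply]
  module

theorem qCommutator_apply_r (he : IsVermaVector p c d w y x r δ e)
    (h : SkewPair q p c x r δ) (hqp : q * p = 1) :
    (δ * r - p • (r * δ)) (r e) = (((p - p ^ 3) * d) • x) (r e) := by
  have hδx (v : V) : δ (x v) = _ := LinearMap.congr_fun h.δ_mul_x v
  have hrx (v : V) : r (x v) = _ := LinearMap.congr_fun h.r_mul_x v
  simp only [Module.End.mul_apply, LinearMap.add_apply, LinearMap.sub_apply, LinearMap.smul_apply,
    map_add, map_sub, map_smul, he.δ_apply, he.δ_r_apply, he.r_r_apply, hδx, hrx]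
  match_scalars <;> grind

theorem qCasimir_apply_r (he : IsVermaVector p c d w y x r δ e) (h : SkewPair q p c x r δ) :
    (r * r + (p ^ 3 * c) • (δ * δ) - p • (x * r * δ)) (r e) =
      ((p ^ 3 * w + (p ^ 3 + p ^ 5) * (c * d)) • (1 : Module.End A V)
        - (p ^ 3 * d) • (x * x)) (r e) := by
  have hδx (v : V) : δ (x v) = _ := LinearMap.congr_fun h.δ_mul_x v
  have hrx (v : V) : r (x v) = _ := LinearMap.congr_fun h.r_mul_x v
  simp only [Module.End.mul_apply, LinearMap.add_apply, LinearMap.sub_apply, LinearMap.smul_apply,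
    map_add, map_sub, map_smul, he.δ_apply, he.δ_r_apply, he.r_r_apply, hδx, hrx,
    Module.End.one_apply]
  match_scalars <;> grind

end IsVermaVector

/-- The basis `e, r e` of the module of Verma type over `A[X]`. -/
abbrev vermaVec (A : Type*) [CommRing A] (i : Fin 2) : Fin 2 → A[X] := Pi.single i 1

/-- The actions of `r` (index `0`) and `δ` (index `1`) on the module of Verma type `A[X]²`. Their
values on `e = vermaVec A 0` and `r e = vermaVec A 1` are those required by `IsVermaVector`. -/
def vermaOp (q p c d w y : A) : Fin 2 → Module.End A (Fin 2 → A[X]) :=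
  let x := mulX A (Fin 2)
  let e := vermaVec A
  skewExtension (skewMatrix q p c)
    ![![e 1, (p ^ 3 * w + (p ^ 3 + p ^ 5) * (c * d) - p ^ 3 * c * y ^ 2) • e 0
        - (p ^ 3 * d) • x (x (e 0)) + (p * y) • x (e 1)],
      ![y • e 0, ((p - p ^ 3) * d) • x (e 0) + (p * y) • e 1]]

theorem vermaOp_zero_vermaVec_zero (q p c d w y : A) :
    vermaOp q p c d w y 0 (vermaVec A 0) = vermaVec A 1 :=
  skewExtension_single ..

theorem isVermaVector_vermaVec_zero (q p c d w y : A) :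
    IsVermaVector p c d w y (mulX A (Fin 2)) (vermaOp q p c d w y 0) (vermaOp q p c d w y 1)
      (vermaVec A 0) where
  δ_apply := skewExtension_single ..
  δ_r_apply := by rw [vermaOp_zero_vermaVec_zero]; exact skewExtension_single ..
  r_r_apply := by rw [vermaOp_zero_vermaVec_zero]; exact skewExtension_single ..

theorem straightenedRel_vermaOp {q p : A} (hqp : q * p = 1) (c d w y : A) :
    StraightenedRel q p c d w (mulX A (Fin 2)) (vermaOp q p c d w y 0)
      (vermaOp q p c d w y 1) := by
  have h : SkewPair q p c (mulX A (Fin 2)) (vermaOp q p c d w y 0) (vermaOp q p c d w y 1) :=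
    skewPair_skewExtension q p c _
  have he := isVermaVector_vermaVec_zero q p c d w y
  have hcommutator := he.qCommutator_apply_r h hqp
  have hcasimir := he.qCasimir_apply_r h
  rw [vermaOp_zero_vermaVec_zero] at hcommutator hcasimir
  have hδr := eq_of_commute_mulX (h.commute_qCommutator hqp) ((Commute.refl _).smul_left _)
    (Fin.forall_fin_two.2 ⟨he.qCommutator_apply, hcommutator⟩)
  have hrr := eq_of_commute_mulX (h.commute_qCasimir hqp)
    (((Commute.one_left _).smul_left _).sub_left
      (((Commute.refl _).mul_left (Commute.refl _)).smul_left _))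
    (Fin.forall_fin_two.2 ⟨he.qCasimir_apply, hcasimir⟩)
  refine ⟨h, ?_, ?_⟩
  · rw [add_comm, ← hδr, sub_add_cancel]
  · rw [sub_right_comm, ← hrr]
    abel

theorem linearIndependent_mulX_pow_mul_vermaOp_pow (q p c d w y : A) :
    LinearIndependent A fun i : ℕ × Fin 2 =>
      (mulX A (Fin 2) ^ i.1 * vermaOp q p c d w y 0 ^ (i.2 : ℕ)) (vermaVec A 0) := by
  have hsingle (i : ℕ × Fin 2) :
      (mulX A (Fin 2) ^ i.1 * vermaOp q p c d w y 0 ^ (i.2 : ℕ)) (vermaVec A 0) =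
        Pi.basis (fun _ => basisMonomials A) ⟨i.2, i.1⟩ := by
    obtain ⟨n, ε⟩ := i
    have hr : (vermaOp q p c d w y 0 ^ (ε : ℕ)) (vermaVec A 0) = vermaVec A ε := by
      fin_cases ε
      · rfl
      · simpa using vermaOp_zero_vermaVec_zero q p c d w y
    rw [Module.End.mul_apply, hr, mulX_pow_apply, Pi.basis_apply, coe_basisMonomials]
    simp [vermaVec, ← Pi.single_smul, X_pow_eq_monomial]
  simp only [hsingle]
  exact (Pi.basis fun _ => basisMonomials A).linearIndependent.comp
    (fun i : ℕ × Fin 2 => (⟨i.2, i.1⟩ : Σ _ : Fin 2, ℕ)) (by rintro ⟨⟩ ⟨⟩ h; grind)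

end VermaModule

end PolynomialModels

/-! ### Representations of `ℬ` by twisted operators -/

section Twist
variable {𝕜 A V : Type*} [Field 𝕜] [CommRing A] [Algebra 𝕜 A] [AddCommGroup V] [Module 𝕜 V]
  [Module A V] [IsScalarTower 𝕜 A V]

/-- The extension of `L` to functions `ℤ → V` in bidegree `(i, j)`: shift the argument by `j` and
scale the value at `n` by `q ^ (i * n)`. -/
def twist (q : 𝕜) (i j : ℤ) : Module.End A V →ₗ[A] Module.End A (ℤ → V) where
  toFun L :=
    { toFun v n := q ^ (i * n) • L (v (n - j))
      map_add' u v := by ext n; simp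
      map_smul' a v := by ext n; simp [smul_comm a] }
  map_add' L L' := by ext v n; simp
  map_smul' a L := by ext v n; simp [smul_comm a]

theorem twist_apply (q : 𝕜) (i j : ℤ) (L : Module.End A V) (v : ℤ → V) (n : ℤ) :
    twist q i j L v n = q ^ (i * n) • L (v (n - j)) := rfl

theorem twist_zero_zero_one (q : 𝕜) : twist q 0 0 (1 : Module.End A V) = 1 := by
  ext v n; simp [twist_apply]

theorem twist_mul {q : 𝕜} (hq : q ≠ 0) (i j i' j' : ℤ) (L L' : Module.End A V) :
    twist q i j L * twist q i' j' L' =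
      q ^ (-(j * i')) • twist q (i + i') (j + j') (L * L') := by
  ext v n
  simp only [Module.End.mul_apply, LinearMap.smul_apply, Pi.smul_apply, twist_apply, smul_smul,
    LinearMap.map_smul_of_tower]
  rw [← zpow_add₀ hq, ← zpow_add₀ hq, sub_sub]
  congr 2
  ring

end Twist

theorem zp_prodMk {M N : Type*} [Monoid M] [Monoid N] (x x' : M) (y y' : N) (n : ℤ) :
    zp (x, y) (x', y') n = (zp x x' n, zp y y' n) := by
  cases n <;> rfl

theorem zp_mem {M : Type*} [Monoid M] {S : Submonoid M} {x x' : M} (hx : x ∈ S) (hx' : x' ∈ S)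
    (n : ℤ) : zp x x' n ∈ S := by
  cases n with
  | ofNat n => exact pow_mem hx n
  | negSucc n => exact pow_mem hx' (n + 1)

section Rep
variable {A V : Type*} [CommRing A] [Algebra ℂ A] [AddCommGroup V] [Module ℂ V] [Module A V]
  [IsScalarTower ℂ A V]

/-- The images of the generators of `ℬ`: `x`, `r`, `δ` and the scalars `c`, `d`, `w`, twisted by the
bidegrees of `c₁`, `r`, `d₁`, `c₂`, `d₂`, `w`. -/
def genTwist (q : ℂ) (c d : Aˣ) (w : A) (x r δ : Module.End A V) :
    BGen → Module.End A (ℤ → V)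
  | .c1 => twist q 1 0 x
  | .c2 => twist q 2 0 ((c : A) • 1)
  | .c2i => twist q (-2) 0 ((↑c⁻¹ : A) • 1)
  | .d1 => twist q 0 1 δ
  | .d2 => twist q 0 2 ((d : A) • 1)
  | .d2i => twist q 0 (-2) ((↑d⁻¹ : A) • 1)
  | .r => twist q 1 1 r
  | .w => twist q 2 2 (w • 1)

variable {q : ℂ} {c d : Aˣ} {w : A} {x r δ : Module.End A V}

theorem lift_genTwist_eq_of_bRel (hq : q ≠ 0)
    (h : StraightenedRel (algebraMap ℂ A q) (algebraMap ℂ A q⁻¹) ↑c ↑d w x r δ) {a b : FB}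
    (hab : BRel q a b) :
    FreeAlgebra.lift ℂ (genTwist q c d w x r δ) a =
      FreeAlgebra.lift ℂ (genTwist q c d w x r δ) b := by
  have hqq : algebraMap ℂ A q * algebraMap ℂ A q⁻¹ = 1 := by
    rw [← map_mul, mul_inv_cancel₀ hq, map_one]
  have hcc : (c : A) * ↑c⁻¹ = 1 := c.mul_inv
  have hdd : (d : A) * ↑d⁻¹ = 1 := d.mul_inv
  cases hab <;>
    simp only [gB, map_mul, map_add, map_sub, map_smul, map_one, FreeAlgebra.lift_ι_apply, genTwist,
      smul_mul_assoc, mul_smul_comm, one_mul, mul_one, twist_mul hq, twist_zero_zero_one,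
      h.δ_mul_x, h.r_mul_x, h.δ_mul_r, h.r_mul_r, Int.reduceMul, Int.reduceAdd, Int.reduceNeg,
      neg_zero, zpow_neg, zpow_ofNat, ← inv_pow]
  all_goals match_scalars <;> grind

/-- The representation of `ℬ` on functions `ℤ → V` attached to operators satisfying
`StraightenedRel`. -/
def twistRep (hq : q ≠ 0)
    (h : StraightenedRel (algebraMap ℂ A q) (algebraMap ℂ A q⁻¹) ↑c ↑d w x r δ) :
    AlgB q →ₐ[ℂ] Module.End A (ℤ → V) :=
  RingQuot.liftAlgHom ℂ ⟨FreeAlgebra.lift ℂ (genTwist q c d w x r δ),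
    fun {_ _} => lift_genTwist_eq_of_bRel hq h⟩

theorem twistRep_mkAlgHom_gB (hq : q ≠ 0)
    (h : StraightenedRel (algebraMap ℂ A q) (algebraMap ℂ A q⁻¹) ↑c ↑d w x r δ) (g : BGen) :
    twistRep hq h (RingQuot.mkAlgHom ℂ (BRel q) (gB g)) = genTwist q c d w x r δ g := by
  rw [twistRep, RingQuot.liftAlgHom_mkAlgHom_apply, gB, FreeAlgebra.lift_ι_apply]

/-- The pairs `(b, L)` for which `b` acts through `ρ` as a twist of `L`, up to a nonzero scalar. -/
def twistGraph (hq : q ≠ 0) {B : Type*} [Monoid B] (ρ : B →* Module.End A (ℤ → V)) :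
    Submonoid (B × Module.End A V) where
  carrier := {T | ∃ (s : ℂˣ) (i j : ℤ), ρ T.1 = s • twist q i j T.2}
  one_mem' := ⟨1, 0, 0, by rw [Prod.fst_one, Prod.snd_one, map_one, twist_zero_zero_one, one_smul]⟩
  mul_mem' := by
    rintro S T ⟨s, i, j, hS⟩ ⟨t, i', j', hT⟩
    refine ⟨s * t * Units.mk0 q hq ^ (-(j * i')), i + i', j + j', ?_⟩
    rw [Prod.fst_mul, Prod.snd_mul, map_mul, hS, hT, smul_mul_smul_comm, twist_mul hq,
      mul_smul (s * t)]
    congr 1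
    rw [Units.smul_def, Units.val_zpow_eq_zpow_val, Units.val_mk0]

theorem exists_twistRep_pbwB_eq (hq : q ≠ 0)
    (h : StraightenedRel (algebraMap ℂ A q) (algebraMap ℂ A q⁻¹) ↑c ↑d w x r δ)
    (a : ℕ) (n : ℤ) (ε : Fin 2) (b : ℕ) (m : ℤ) (k : ℕ) :
    ∃ (s : ℂˣ) (i j : ℤ), twistRep hq h (pbwB q (a, n, ε, b, m, k)) = s • twist q i j
      ((w ^ k * (↑(d ^ m) * ↑(c ^ n)) : A) • (x ^ a * r ^ (ε : ℕ) * δ ^ b)) := by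
  have hgen (g : BGen) {i j L} (hL : genTwist q c d w x r δ g = twist q i j L) :
      (RingQuot.mkAlgHom ℂ (BRel q) (gB g), L) ∈ twistGraph hq (twistRep hq h : AlgB q →* _) :=
    ⟨1, i, j, by rw [one_smul]; exact (twistRep_mkAlgHom_gB hq h g).trans hL⟩
  have hmem := mul_mem (mul_mem (mul_mem (mul_mem (mul_mem (pow_mem (hgen .c1 rfl) a)
    (zp_mem (hgen .c2 rfl) (hgen .c2i rfl) n)) (pow_mem (hgen .r rfl) ε))
    (pow_mem (hgen .d1 rfl) b)) (zp_mem (hgen .d2 rfl) (hgen .d2i rfl) m))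
    (pow_mem (hgen .w rfl) k)
  have hzp (u : Aˣ) (n : ℤ) : zp ((u : A) • (1 : Module.End A V)) ((↑u⁻¹ : A) • 1) n =
      (↑(u ^ n) : A) • 1 := by
    cases n <;> simp [zp, smul_pow]
  simp only [zp_prodMk, hzp, Prod.mk_mul_mk, Prod.pow_mk, smul_pow, one_pow, mul_smul_comm,
    smul_mul_assoc, mul_one, smul_smul] at hmem
  exact hmem

theorem linearIndependent_pbwB_of_straightenedRel (hq : q ≠ 0)
    (h : StraightenedRel (algebraMap ℂ A q) (algebraMap ℂ A q⁻¹) ↑c ↑d w x r δ)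
    {e : V} {y : A} (hδe : δ e = y • e)
    (hA : LinearIndependent ℂ fun i : ℤ × ℕ × ℤ × ℕ =>
      w ^ i.2.2.2 * (↑(d ^ i.2.2.1) * ↑(c ^ i.1)) * y ^ i.2.1)
    (hV : LinearIndependent A fun i : ℕ × Fin 2 => (x ^ i.1 * r ^ (i.2 : ℕ)) e) :
    LinearIndependent ℂ (pbwB q) := by
  have hδpow (b : ℕ) : (δ ^ b) e = y ^ b • e := by
    induction b with
    | zero => simp
    | succ b ih => rw [pow_succ, Module.End.mul_apply, hδe, map_smul, ih, smul_smul, pow_succ']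
  let eval : AlgB q →ₗ[ℂ] V :=
    LinearMap.proj 0 ∘ₗ LinearMap.applyₗ' ℂ (fun _ : ℤ => e) ∘ₗ (twistRep hq h).toLinearMap
  have heval (m : ℕ × ℤ × Fin 2 × ℕ × ℤ × ℕ) : ∃ s : ℂˣ, eval (pbwB q m) =
      s • (w ^ m.2.2.2.2.2 * (↑(d ^ m.2.2.2.2.1) * ↑(c ^ m.2.1)) * y ^ m.2.2.2.1) •
        (x ^ m.1 * r ^ (m.2.2.1 : ℕ)) e := by
    obtain ⟨a, n, ε, b, m, k⟩ := m
    obtain ⟨s, i, j, hs⟩ := exists_twistRep_pbwB_eq hq h a n ε b m k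
    refine ⟨s, (congrArg (fun T : Module.End A (ℤ → V) => T (fun _ => e) 0) hs).trans ?_⟩
    simp only [LinearMap.smul_apply, Pi.smul_apply, twist_apply, mul_zero, zpow_zero, one_smul,
      Module.End.mul_apply, hδpow, map_smul, smul_smul]
  choose s hs using heval
  have hinj : Function.Injective fun m : ℕ × ℤ × Fin 2 × ℕ × ℤ × ℕ =>
      ((m.2.1, m.2.2.2.1, m.2.2.2.2.1, m.2.2.2.2.2), (m.1, m.2.2.1)) := by
    rintro ⟨⟩ ⟨⟩ hm
    grind
  refine LinearIndependent.of_comp eval ?_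
  rw [show eval ∘ pbwB q = _ from funext hs]
  exact ((linearIndependent_smul hA hV).comp _ hinj).units_smul s

end Rep

/-- The monomial with exponent `f 1`, invertible with inverse of exponent `f (-1)`. -/
def monomialUnit (R : Type*) {M : Type*} [Semiring R] [AddMonoid M] (f : ℤ →+ M) :
    (AddMonoidAlgebra R M)ˣ :=
  Units.map ((AddMonoidAlgebra.of R M).comp f.toMultiplicative) (toUnits (.ofAdd 1))

theorem val_monomialUnit_zpow (R : Type*) {M : Type*} [Semiring R] [AddMonoid M] (f : ℤ →+ M)
    (n : ℤ) : (↑(monomialUnit R f ^ n) : AddMonoidAlgebra R M) = .single (f n) 1 := by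
  simp [monomialUnit, ← map_zpow, ← ofAdd_zsmul]

/-- The ring `ℂ[c^{±1}, y, d^{±1}, w]`, with exponents in this order. -/
abbrev ParameterRing : Type := AddMonoidAlgebra ℂ (ℤ × ℕ × ℤ × ℕ)

theorem linearIndependent_pbwB {q : ℂ} (hq : q ≠ 0) : LinearIndependent ℂ (pbwB q) := by
  let c : ParameterRingˣ := monomialUnit ℂ (.inl ℤ (ℕ × ℤ × ℕ))
  let d : ParameterRingˣ :=
    monomialUnit ℂ (.comp (.inr ℤ (ℕ × ℤ × ℕ)) (.comp (.inr ℕ _) (.inl ℤ ℕ)))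
  let y : ParameterRing := .single (0, 1, 0, 0) 1
  let w : ParameterRing := .single (0, 0, 0, 1) 1
  have hqp : algebraMap ℂ ParameterRing q * algebraMap ℂ ParameterRing q⁻¹ = 1 := by
    rw [← map_mul, mul_inv_cancel₀ hq, map_one]
  have hbasis : ∀ i : ℤ × ℕ × ℤ × ℕ, w ^ i.2.2.2 * ((d ^ i.2.2.1 : ParameterRingˣ) *
      (c ^ i.1 : ParameterRingˣ)) * y ^ i.2.1 = AddMonoidAlgebra.basis _ ℂ i := by
    rintro ⟨n, b, m, k⟩
    have hc : (↑(c ^ n) : ParameterRing) = .single (n, 0, 0, 0) 1 := val_monomialUnit_zpow ..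
    have hd : (↑(d ^ m) : ParameterRing) = .single (0, 0, m, 0) 1 := val_monomialUnit_zpow ..
    simp [hc, hd, y, w, AddMonoidAlgebra.single_mul_single, AddMonoidAlgebra.single_pow]
  refine linearIndependent_pbwB_of_straightenedRel hq (straightenedRel_vermaOp hqp c d w y)
    (isVermaVector_vermaVec_zero ..).δ_apply ?_ (linearIndependent_mulX_pow_mul_vermaOp_pow ..)
  simp only [hbasis]
  exact (AddMonoidAlgebra.basis ..).linearIndependent

theorem linearIndependent_pbwBplus {q : ℂ} (hq : q ≠ 0) : LinearIndependent ℂ (pbwBplus q) := by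
  let exponents : ℕ × ℕ × Fin 2 × ℕ × ℕ × ℕ → ℕ × ℤ × Fin 2 × ℕ × ℤ × ℕ :=
    fun i => (i.1, i.2.1, i.2.2.1, i.2.2.2.1, i.2.2.2.2.1, i.2.2.2.2.2)
  have exponents_injective : Function.Injective exponents := by
    rintro ⟨⟩ ⟨⟩ h
    grind
  exact (linearIndependent_pbwB hq).comp exponents exponents_injective

/-! ### Spanning -/

theorem zp_units {M : Type*} [Monoid M] (u : Mˣ) (n : ℤ) : zp (u : M) ↑u⁻¹ n = ↑(u ^ n) := by
  cases n <;> simp [zp]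

/-- The integer powers of a unit, as a submonoid of the ambient monoid. -/
def unitZPowers {M : Type*} [Monoid M] (u : Mˣ) : Submonoid M :=
  (Subgroup.zpowers u).toSubmonoid.map (Units.coeHom M)

theorem val_mem_unitZPowers {M : Type*} [Monoid M] (u : Mˣ) : (u : M) ∈ unitZPowers u :=
  ⟨u, Subgroup.mem_zpowers u, rfl⟩

theorem inv_mem_unitZPowers {M : Type*} [Monoid M] (u : Mˣ) : (↑u⁻¹ : M) ∈ unitZPowers u :=
  ⟨u⁻¹, (Subgroup.zpowers u).inv_mem (Subgroup.mem_zpowers u), rfl⟩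

section QCommute
variable {𝕜 B : Type*} [CommRing 𝕜] [Ring B] [Algebra 𝕜 B] {x y z : B}

variable (𝕜) in
/-- `x` and `y` commute up to an invertible scalar. -/
def QCommute (x y : B) : Prop := ∃ s : 𝕜ˣ, x * y = s • (y * x)

namespace QCommute

theorem of_commute (h : Commute x y) : QCommute 𝕜 x y := ⟨1, by rw [one_smul, h.eq]⟩

theorem symm (h : QCommute 𝕜 x y) : QCommute 𝕜 y x := by
  obtain ⟨s, hs⟩ := h
  exact ⟨s⁻¹, by rw [hs, inv_smul_smul]⟩

theorem mul_right (hy : QCommute 𝕜 x y) (hz : QCommute 𝕜 x z) : QCommute 𝕜 x (y * z) := by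
  obtain ⟨s, hs⟩ := hy
  obtain ⟨t, ht⟩ := hz
  refine ⟨s * t, ?_⟩
  rw [← mul_assoc, hs, smul_mul_assoc, mul_assoc, ht, mul_smul_comm, smul_smul, mul_assoc]

theorem units_inv_right {u : Bˣ} (h : QCommute 𝕜 x u) : QCommute 𝕜 x ↑u⁻¹ := by
  obtain ⟨s, hs⟩ := h
  refine ⟨s⁻¹, ?_⟩
  calc x * ↑u⁻¹ = ↑u⁻¹ * (s⁻¹ • s • (↑u * x)) * ↑u⁻¹ := by
        rw [inv_smul_smul, Units.inv_mul_cancel_left]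
    _ = s⁻¹ • (↑u⁻¹ * x) := by
        rw [← hs, mul_smul_comm, smul_mul_assoc, mul_assoc, Units.mul_inv_cancel_right]

variable (𝕜) in
/-- The elements that commute with `x` up to an invertible scalar. -/
def centralizer (x : B) : Submonoid B where
  carrier := {y | QCommute 𝕜 x y}
  one_mem' := .of_commute (Commute.one_right x)
  mul_mem' := mul_right

theorem pow_right (h : QCommute 𝕜 x y) (n : ℕ) : QCommute 𝕜 x (y ^ n) :=
  pow_mem (S := centralizer 𝕜 x) h n

theorem of_mem_powers (h : QCommute 𝕜 x y) (hz : z ∈ Submonoid.powers y) : QCommute 𝕜 x z := by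
  obtain ⟨n, rfl⟩ := hz
  exact h.pow_right n

theorem of_mem_unitZPowers {u : Bˣ} (h : QCommute 𝕜 x u) (hy : y ∈ unitZPowers u) :
    QCommute 𝕜 x y := by
  obtain ⟨_, ⟨n, rfl⟩, rfl⟩ := hy
  cases n with
  | ofNat n => simpa using h.pow_right n
  | negSucc n => simpa using h.units_inv_right.pow_right (n + 1)

end QCommute

end QCommute

section leftMultiplier
variable {𝕜 B : Type*} [CommSemiring 𝕜] [Semiring B] [Algebra 𝕜 B]

/-- The elements whose left multiplication maps `S` into itself. -/
def leftMultiplier (S : Submodule 𝕜 B) : Subalgebra 𝕜 B where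
  carrier := {x | ∀ s ∈ S, x * s ∈ S}
  mul_mem' hx hy s hs := by rw [mul_assoc]; exact hx _ (hy s hs)
  add_mem' hx hy s hs := by rw [add_mul]; exact S.add_mem (hx s hs) (hy s hs)
  algebraMap_mem' c s hs := by rw [← Algebra.smul_def]; exact S.smul_mem c hs

variable {S N : Submodule 𝕜 B} {G : Set B} {x : B}

theorem one_le_span (P : Submonoid B) : 1 ≤ Submodule.span 𝕜 (P : Set B) :=
  Submodule.one_le.2 (Submodule.subset_span P.one_mem)

theorem adjoin_le_of_subset_leftMultiplier (h1 : (1 : B) ∈ S) (hG : G ⊆ leftMultiplier S) :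
    Subalgebra.toSubmodule (Algebra.adjoin 𝕜 G) ≤ S :=
  fun x hx => mul_one x ▸ Algebra.adjoin_le hG hx 1 h1

theorem span_mul_le :
    Submodule.span 𝕜 G * N ≤ S ↔ ∀ g ∈ G, ∀ n ∈ N, g * n ∈ S := by
  refine ⟨fun h g hg n hn => h (Submodule.mul_mem_mul (Submodule.subset_span hg) hn),
    fun h => Submodule.mul_le.2 fun x hx n hn => ?_⟩
  exact Submodule.span_le (p := S.comap (LinearMap.mulRight 𝕜 n)).2 (fun g hg => h g hg n hn) hx

theorem mem_leftMultiplier_span {P : Submonoid B} (hx : x ∈ P) :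
    x ∈ leftMultiplier (Submodule.span 𝕜 (P : Set B)) := fun _ hs =>
  Submodule.span_le (p := (Submodule.span 𝕜 (P : Set B)).comap (LinearMap.mulLeft 𝕜 x)).2
    (fun _ hy => Submodule.subset_span (P.mul_mem hx hy)) hs

theorem mem_leftMultiplier_mul_right (hx : x ∈ leftMultiplier S) :
    x ∈ leftMultiplier (S * N) := fun _ hs =>
  Submodule.mul_le (P := (S * N).comap (LinearMap.mulLeft 𝕜 x)).2
    (fun s hs n hn => by
      simpa only [Submodule.mem_comap, LinearMap.mulLeft_apply, ← mul_assoc] using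
        Submodule.mul_mem_mul (hx s hs) hn) hs

end leftMultiplier

namespace QCommute
variable {𝕜 B : Type*} [CommRing 𝕜] [Ring B] [Algebra 𝕜 B] {x y s : B} {S : Submodule 𝕜 B}

theorem mul_mul_mem (h : QCommute 𝕜 x y) (hy : y * (x * s) ∈ S) : x * (y * s) ∈ S := by
  obtain ⟨t, ht⟩ := h
  rw [← mul_assoc, ht, smul_mul_assoc, mul_assoc, Units.smul_def]
  exact S.smul_mem _ hy

theorem mem_leftMultiplier_span_mul {G : Set B} (hx : ∀ g ∈ G, QCommute 𝕜 x g)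
    (hS : x ∈ leftMultiplier S) : x ∈ leftMultiplier (Submodule.span 𝕜 G * S) :=
  fun _ hs => span_mul_le (S := (Submodule.span 𝕜 G * S).comap (LinearMap.mulLeft 𝕜 x)).2
    (fun g hg n hn => (hx g hg).mul_mul_mem
      (Submodule.mul_mem_mul (Submodule.subset_span hg) (hS n hn))) hs

end QCommute

section Relations
variable (q : ℂ)

/-- `c₂` as a unit of `ℬ`. -/
def bc2Unit : (AlgB q)ˣ where
  val := bc2 q
  inv := bc2i q
  val_inv := by
    simpa only [bc2, bc2i, map_mul, map_one] using
      RingQuot.mkAlgHom_rel ℂ (BRel.c2c2i (q := q))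
  inv_val := by
    simpa only [bc2, bc2i, map_mul, map_one] using
      RingQuot.mkAlgHom_rel ℂ (BRel.c2ic2 (q := q))

/-- `d₂` as a unit of `ℬ`. -/
def bd2Unit : (AlgB q)ˣ where
  val := bd2 q
  inv := bd2i q
  val_inv := by
    simpa only [bd2, bd2i, map_mul, map_one] using
      RingQuot.mkAlgHom_rel ℂ (BRel.d2d2i (q := q))
  inv_val := by
    simpa only [bd2, bd2i, map_mul, map_one] using
      RingQuot.mkAlgHom_rel ℂ (BRel.d2id2 (q := q))

variable {q}

theorem qCommute_mkAlgHom_of_commute {g g' : BGen} (h : BRel q (gB g * gB g') (gB g' * gB g)) :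
    QCommute ℂ (RingQuot.mkAlgHom ℂ (BRel q) (gB g)) (RingQuot.mkAlgHom ℂ (BRel q) (gB g')) :=
  .of_commute (by simpa only [map_mul, Commute, SemiconjBy] using RingQuot.mkAlgHom_rel ℂ h)

theorem qCommute_mkAlgHom {g g' : BGen} {s : ℂ} (hs : s ≠ 0)
    (h : BRel q (gB g * gB g') (s • (gB g' * gB g))) :
    QCommute ℂ (RingQuot.mkAlgHom ℂ (BRel q) (gB g)) (RingQuot.mkAlgHom ℂ (BRel q) (gB g')) :=
  ⟨Units.mk0 s hs, by
    simpa only [map_mul, map_smul, Units.smul_mk0] using RingQuot.mkAlgHom_rel ℂ h⟩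

theorem bd1_mul_bc1 : bd1 q * bc1 q = bc1 q * bd1 q + (q⁻¹ ^ 2 - 1) • br q := by
  simpa only [bc1, bd1, br, map_mul, map_add, map_smul] using
    RingQuot.mkAlgHom_rel ℂ (BRel.d1c1 (q := q))

theorem bd1_mul_br : bd1 q * br q =
    q⁻¹ ^ 2 • (br q * bd1 q) + ((1 - q⁻¹ ^ 2) * q⁻¹ ^ 2) • (bc1 q * bd2 q) := by
  simpa only [bc1, bd1, bd2, br, map_mul, map_add, map_smul] using
    RingQuot.mkAlgHom_rel ℂ (BRel.d1r (q := q))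

theorem br_mul_bc1 : br q * bc1 q =
    q⁻¹ ^ 2 • (bc1 q * br q) + ((1 - q⁻¹ ^ 2) * q⁻¹ ^ 2) • (bc2 q * bd1 q) := by
  simpa only [bc1, bc2, bd1, br, map_mul, map_add, map_smul] using
    RingQuot.mkAlgHom_rel ℂ (BRel.rc1 (q := q))

theorem br_mul_br : br q * br q = q⁻¹ ^ 4 • bw q + (q⁻¹ ^ 4 + q⁻¹ ^ 6) • (bc2 q * bd2 q)
    - q⁻¹ ^ 4 • (bc2 q * bd1 q * bd1 q) - q⁻¹ ^ 4 • (bc1 q * bc1 q * bd2 q)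
    + q⁻¹ ^ 2 • (bc1 q * br q * bd1 q) := by
  simpa only [bc1, bc2, bd1, bd2, br, bw, map_mul, map_add, map_sub, map_smul] using
    RingQuot.mkAlgHom_rel ℂ (BRel.rr (q := q))

end Relations

section Spanning
variable {q : ℂ}

/-- The span of the products `d₁^b z w^c` with `z ∈ Z`. -/
def pbwTail (Z : Submonoid (AlgB q)) : Submodule ℂ (AlgB q) :=
  Submodule.span ℂ (Submonoid.powers (bd1 q) : Set (AlgB q)) *
    (Submodule.span ℂ (Z : Set (AlgB q)) * Submodule.span ℂ (Submonoid.powers (bw q)))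

/-- The span of the products `c₁^a u r^ε d₁^b z w^c` with `u ∈ U`, `z ∈ Z`. Taking for `U` and `Z`
all integer powers of `c₂` and `d₂`, or only the natural ones, treats `ℬ` and `ℬ⁺` at once. -/
def pbwSpan (U Z : Submonoid (AlgB q)) : Submodule ℂ (AlgB q) :=
  Submodule.span ℂ (Submonoid.powers (bc1 q) : Set (AlgB q)) *
    (Submodule.span ℂ (U : Set (AlgB q)) * (Submodule.span ℂ {1, br q} * pbwTail Z))

variable {U Z : Submonoid (AlgB q)}

theorem qCommute_bw_of_mem_unitZPowers_bd2Unit (hq : q ≠ 0) {z : AlgB q}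
    (hz : z ∈ unitZPowers (bd2Unit q)) :
    QCommute ℂ (bw q) z :=
  (qCommute_mkAlgHom (pow_ne_zero 4 hq) .wd2).of_mem_unitZPowers (u := bd2Unit q) hz

theorem qCommute_of_mem_unitZPowers_bd2Unit {x z : AlgB q} (h : QCommute ℂ (bd2 q) x)
    (hz : z ∈ unitZPowers (bd2Unit q)) : QCommute ℂ z x :=
  (h.symm.of_mem_unitZPowers (u := bd2Unit q) hz).symm

theorem bd1_mem_leftMultiplier_pbwTail : bd1 q ∈ leftMultiplier (pbwTail Z) :=
  mem_leftMultiplier_mul_right (mem_leftMultiplier_span (Submonoid.mem_powers _))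

theorem mem_leftMultiplier_pbwTail (hZ : Z ≤ unitZPowers (bd2Unit q)) {z : AlgB q} (hz : z ∈ Z) :
    z ∈ leftMultiplier (pbwTail Z) :=
  QCommute.mem_leftMultiplier_span_mul
    (fun _ => QCommute.of_mem_powers
      (qCommute_of_mem_unitZPowers_bd2Unit (qCommute_mkAlgHom_of_commute .d2d1) (hZ hz)))
    (mem_leftMultiplier_mul_right (mem_leftMultiplier_span hz))

theorem bw_mem_leftMultiplier_pbwTail (hq : q ≠ 0) (hZ : Z ≤ unitZPowers (bd2Unit q)) :
    bw q ∈ leftMultiplier (pbwTail Z) :=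
  QCommute.mem_leftMultiplier_span_mul
    (fun _ => (qCommute_mkAlgHom (pow_ne_zero 2 hq) .wd1).of_mem_powers)
    (QCommute.mem_leftMultiplier_span_mul
      (fun _ hz => qCommute_bw_of_mem_unitZPowers_bd2Unit hq (hZ hz))
      (mem_leftMultiplier_span (Submonoid.mem_powers _)))

theorem bc1_mem_leftMultiplier_pbwSpan : bc1 q ∈ leftMultiplier (pbwSpan U Z) :=
  mem_leftMultiplier_mul_right (mem_leftMultiplier_span (Submonoid.mem_powers _))

theorem mem_leftMultiplier_pbwSpan_of_mem_left (hU : U ≤ unitZPowers (bc2Unit q)) {u : AlgB q}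
    (hu : u ∈ U) : u ∈ leftMultiplier (pbwSpan U Z) :=
  QCommute.mem_leftMultiplier_span_mul
    (fun _ => QCommute.of_mem_powers
      ((qCommute_mkAlgHom_of_commute .c2c1).symm.of_mem_unitZPowers (u := bc2Unit q) (hU hu)).symm)
    (mem_leftMultiplier_mul_right (mem_leftMultiplier_span hu))

theorem mem_leftMultiplier_pbwSpan (hU : U ≤ unitZPowers (bc2Unit q)) {x : AlgB q}
    (hc1 : QCommute ℂ x (bc1 q)) (hc2 : QCommute ℂ x (bc2 q)) (hr : QCommute ℂ x (br q))
    (hx : x ∈ leftMultiplier (pbwTail Z)) : x ∈ leftMultiplier (pbwSpan U Z) :=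
  QCommute.mem_leftMultiplier_span_mul (fun _ => hc1.of_mem_powers) <|
  QCommute.mem_leftMultiplier_span_mul
    (fun _ hu => hc2.of_mem_unitZPowers (u := bc2Unit q) (hU hu)) <|
  QCommute.mem_leftMultiplier_span_mul
    (by rintro _ (rfl | rfl); exacts [.of_commute (Commute.one_right x), hr]) hx

theorem mem_leftMultiplier_pbwSpan_of_mem_right (hq : q ≠ 0) (hU : U ≤ unitZPowers (bc2Unit q))
    (hZ : Z ≤ unitZPowers (bd2Unit q)) {z : AlgB q} (hz : z ∈ Z) :
    z ∈ leftMultiplier (pbwSpan U Z) := by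
  have hq' (n : ℕ) : q⁻¹ ^ n ≠ 0 := pow_ne_zero n (inv_ne_zero hq)
  exact mem_leftMultiplier_pbwSpan hU
    (qCommute_of_mem_unitZPowers_bd2Unit (qCommute_mkAlgHom (hq' 2) .d2c1) (hZ hz))
    (qCommute_of_mem_unitZPowers_bd2Unit (qCommute_mkAlgHom (hq' 4) .d2c2) (hZ hz))
    (qCommute_of_mem_unitZPowers_bd2Unit (qCommute_mkAlgHom (hq' 2) .d2r) (hZ hz))
    (mem_leftMultiplier_pbwTail hZ hz)

theorem bw_mem_leftMultiplier_pbwSpan (hq : q ≠ 0) (hU : U ≤ unitZPowers (bc2Unit q))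
    (hZ : Z ≤ unitZPowers (bd2Unit q)) : bw q ∈ leftMultiplier (pbwSpan U Z) := by
  have hq' (n : ℕ) : q⁻¹ ^ n ≠ 0 := pow_ne_zero n (inv_ne_zero hq)
  exact mem_leftMultiplier_pbwSpan hU (qCommute_mkAlgHom (hq' 2) .wc1)
    (qCommute_mkAlgHom (hq' 4) .wc2) (qCommute_mkAlgHom_of_commute .wr)
    (bw_mem_leftMultiplier_pbwTail hq hZ)

theorem span_mul_pbwTail_le_pbwSpan :
    Submodule.span ℂ {1, br q} * pbwTail Z ≤ pbwSpan U Z :=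
  (le_mul_of_one_le_left' (one_le_span U)).trans (le_mul_of_one_le_left' (one_le_span _))

theorem mem_pbwSpan_of_mem_pbwTail {t : AlgB q} (ht : t ∈ pbwTail Z) : t ∈ pbwSpan U Z :=
  span_mul_pbwTail_le_pbwSpan
    (one_mul t ▸ Submodule.mul_mem_mul (Submodule.subset_span (by simp)) ht)

theorem br_mul_mem_pbwSpan {t : AlgB q} (ht : t ∈ pbwTail Z) : br q * t ∈ pbwSpan U Z :=
  span_mul_pbwTail_le_pbwSpan (Submodule.mul_mem_mul (Submodule.subset_span (by simp)) ht)

theorem one_mem_pbwSpan : 1 ∈ pbwSpan U Z :=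
  mem_pbwSpan_of_mem_pbwTail (Submodule.one_le.1
    (one_le_mul (one_le_span _) (one_le_mul (one_le_span Z) (one_le_span _))))

/-- The part of `pbwSpan U Z` that `r` and `d₁` multiply into `pbwSpan U Z`. -/
def pbwCore (U Z : Submonoid (AlgB q)) : Submodule ℂ (AlgB q) :=
  pbwSpan U Z ⊓ (pbwSpan U Z).comap (LinearMap.mulLeft ℂ (br q)) ⊓
    (pbwSpan U Z).comap (LinearMap.mulLeft ℂ (bd1 q))

theorem mem_pbwCore {s : AlgB q} : s ∈ pbwCore U Z ↔
    (s ∈ pbwSpan U Z ∧ br q * s ∈ pbwSpan U Z) ∧ bd1 q * s ∈ pbwSpan U Z := Iff.rfl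

theorem bc1_mem_leftMultiplier_pbwCore (hU : U ≤ unitZPowers (bc2Unit q)) (hc2 : bc2 q ∈ U) :
    bc1 q ∈ leftMultiplier (pbwCore U Z) := by
  rintro s ⟨⟨hs, hrs⟩, hds⟩
  have hc1 := bc1_mem_leftMultiplier_pbwSpan (U := U) (Z := Z)
  refine mem_pbwCore.2 ⟨⟨hc1 s hs, ?_⟩, ?_⟩
  · rw [← mul_assoc, br_mul_bc1, add_mul, smul_mul_assoc, smul_mul_assoc, mul_assoc, mul_assoc]
    exact add_mem (Submodule.smul_mem _ _ (hc1 _ hrs))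
      (Submodule.smul_mem _ _ (mem_leftMultiplier_pbwSpan_of_mem_left hU hc2 _ hds))
  · rw [← mul_assoc, bd1_mul_bc1, add_mul, smul_mul_assoc, mul_assoc]
    exact add_mem (hc1 _ hds) (Submodule.smul_mem _ _ hrs)

theorem mem_leftMultiplier_pbwCore_of_mem_left (hq : q ≠ 0) (hU : U ≤ unitZPowers (bc2Unit q))
    {u : AlgB q} (hu : u ∈ U) : u ∈ leftMultiplier (pbwCore U Z) := by
  rintro s ⟨⟨hs, hrs⟩, hds⟩
  have hq' : q⁻¹ ^ 2 ≠ 0 := pow_ne_zero 2 (inv_ne_zero hq)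
  have hu' := mem_leftMultiplier_pbwSpan_of_mem_left (Z := Z) hU hu
  have hru := (qCommute_mkAlgHom hq' .rc2).of_mem_unitZPowers (u := bc2Unit q) (hU hu)
  have hdu := (qCommute_mkAlgHom hq' .d1c2).of_mem_unitZPowers (u := bc2Unit q) (hU hu)
  exact mem_pbwCore.2 ⟨⟨hu' s hs, hru.mul_mul_mem (hu' _ hrs)⟩, hdu.mul_mul_mem (hu' _ hds)⟩

theorem mem_pbwCore_of_mem_pbwTail {t : AlgB q} (ht : t ∈ pbwTail Z) : t ∈ pbwCore U Z :=
  mem_pbwCore.2 ⟨⟨mem_pbwSpan_of_mem_pbwTail ht, br_mul_mem_pbwSpan ht⟩,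
    mem_pbwSpan_of_mem_pbwTail (bd1_mem_leftMultiplier_pbwTail t ht)⟩

theorem br_mul_br_mul_mem_pbwSpan (hq : q ≠ 0) (hU : U ≤ unitZPowers (bc2Unit q))
    (hZ : Z ≤ unitZPowers (bd2Unit q)) (hc2 : bc2 q ∈ U) (hd2 : bd2 q ∈ Z)
    {t : AlgB q} (ht : t ∈ pbwTail Z) : br q * (br q * t) ∈ pbwSpan U Z := by
  have hc1S := bc1_mem_leftMultiplier_pbwSpan (U := U) (Z := Z)
  have hc2S := mem_leftMultiplier_pbwSpan_of_mem_left (Z := Z) hU hc2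
  have hd1t := bd1_mem_leftMultiplier_pbwTail t ht
  have hd2t := mem_leftMultiplier_pbwTail hZ hd2 t ht
  have hwt := bw_mem_leftMultiplier_pbwTail hq hZ t ht
  rw [← mul_assoc, br_mul_br]
  simp only [add_mul, sub_mul, smul_mul_assoc, mul_assoc]
  refine add_mem (sub_mem (sub_mem (add_mem ?_ ?_) ?_) ?_) ?_ <;> apply Submodule.smul_mem
  · exact mem_pbwSpan_of_mem_pbwTail hwt
  · exact hc2S _ (mem_pbwSpan_of_mem_pbwTail hd2t)
  · exact hc2S _ (mem_pbwSpan_of_mem_pbwTail (bd1_mem_leftMultiplier_pbwTail _ hd1t))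
  · exact hc1S _ (hc1S _ (mem_pbwSpan_of_mem_pbwTail hd2t))
  · exact hc1S _ (br_mul_mem_pbwSpan hd1t)

theorem bd1_mul_br_mul_mem_pbwSpan (hZ : Z ≤ unitZPowers (bd2Unit q)) (hd2 : bd2 q ∈ Z)
    {t : AlgB q} (ht : t ∈ pbwTail Z) : bd1 q * (br q * t) ∈ pbwSpan U Z := by
  rw [← mul_assoc, bd1_mul_br]
  simp only [add_mul, smul_mul_assoc, mul_assoc]
  exact add_mem
    (Submodule.smul_mem _ _ (br_mul_mem_pbwSpan (bd1_mem_leftMultiplier_pbwTail t ht)))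
    (Submodule.smul_mem _ _ (bc1_mem_leftMultiplier_pbwSpan _
      (mem_pbwSpan_of_mem_pbwTail (mem_leftMultiplier_pbwTail hZ hd2 t ht))))

theorem span_mul_pbwTail_le_pbwCore (hq : q ≠ 0) (hU : U ≤ unitZPowers (bc2Unit q))
    (hZ : Z ≤ unitZPowers (bd2Unit q)) (hc2 : bc2 q ∈ U) (hd2 : bd2 q ∈ Z) :
    Submodule.span ℂ {1, br q} * pbwTail Z ≤ pbwCore U Z := by
  refine span_mul_le.2 ?_
  rintro _ (rfl | rfl) t ht
  · exact (one_mul t).symm ▸ mem_pbwCore_of_mem_pbwTail ht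
  · exact mem_pbwCore.2 ⟨⟨br_mul_mem_pbwSpan ht, br_mul_br_mul_mem_pbwSpan hq hU hZ hc2 hd2 ht⟩,
      bd1_mul_br_mul_mem_pbwSpan hZ hd2 ht⟩

theorem pbwSpan_le_pbwCore (hq : q ≠ 0) (hU : U ≤ unitZPowers (bc2Unit q))
    (hZ : Z ≤ unitZPowers (bd2Unit q)) (hc2 : bc2 q ∈ U) (hd2 : bd2 q ∈ Z) :
    pbwSpan U Z ≤ pbwCore U Z := by
  have hc1 : (Submonoid.powers (bc1 q) : Set (AlgB q)) ⊆ leftMultiplier (pbwCore U Z) :=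
    (Submonoid.powers_le (P := (leftMultiplier (pbwCore U Z)).toSubmonoid)).2
      (bc1_mem_leftMultiplier_pbwCore hU hc2)
  have hu_span := span_mul_le.2 fun _ hu s hs =>
    mem_leftMultiplier_pbwCore_of_mem_left hq hU hu s
      (span_mul_pbwTail_le_pbwCore hq hU hZ hc2 hd2 hs)
  exact span_mul_le.2 fun _ hc s hs => hc1 hc s (hu_span hs)

theorem adjoin_le_pbwSpan (hq : q ≠ 0) (hU : U ≤ unitZPowers (bc2Unit q))
    (hZ : Z ≤ unitZPowers (bd2Unit q)) (hc2 : bc2 q ∈ U) (hd2 : bd2 q ∈ Z) :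
    Subalgebra.toSubmodule
      (Algebra.adjoin ℂ (U ∪ Z ∪ {bc1 q, br q, bd1 q, bw q} : Set (AlgB q))) ≤ pbwSpan U Z := by
  have le_core := pbwSpan_le_pbwCore hq hU hZ hc2 hd2
  refine adjoin_le_of_subset_leftMultiplier one_mem_pbwSpan ?_
  rintro x ((hx | hx) | (rfl | rfl | rfl | rfl))
  · exact mem_leftMultiplier_pbwSpan_of_mem_left hU hx
  · exact mem_leftMultiplier_pbwSpan_of_mem_right hq hU hZ hx
  · exact bc1_mem_leftMultiplier_pbwSpan
  · exact fun s hs => (le_core hs).1.2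
  · exact fun s hs => (le_core hs).2
  · exact bw_mem_leftMultiplier_pbwSpan hq hU hZ

theorem pbwSpan_le {N : Submodule ℂ (AlgB q)}
    (h : ∀ a, ∀ u ∈ U, ∀ i : Fin 2, ∀ b, ∀ z ∈ Z, ∀ c,
      bc1 q ^ a * u * br q ^ (i : ℕ) * bd1 q ^ b * z * bw q ^ c ∈ N) : pbwSpan U Z ≤ N := by
  simp only [pbwSpan, pbwTail, Submodule.span_mul_span, Submodule.span_le]
  rintro _ ⟨_, ⟨a, rfl⟩, _, ⟨u, hu, _, ⟨e, he, _, ⟨_, ⟨b, rfl⟩, _, ⟨z, hz, _, ⟨c, rfl⟩, rfl⟩,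
    rfl⟩, rfl⟩, rfl⟩, rfl⟩
  obtain ⟨i, rfl⟩ : ∃ i : Fin 2, br q ^ (i : ℕ) = e := by
    obtain rfl | rfl := he
    exacts [⟨0, pow_zero _⟩, ⟨1, pow_one _⟩]
  simpa only [SetLike.mem_coe, mul_assoc] using h a u hu i b z hz c

theorem pbwSpan_unitZPowers_le_span_range_pbwB :
    pbwSpan (unitZPowers (bc2Unit q)) (unitZPowers (bd2Unit q)) ≤
      Submodule.span ℂ (Set.range (pbwB q)) := by
  refine pbwSpan_le ?_
  rintro a _ ⟨_, ⟨m, rfl⟩, rfl⟩ i b _ ⟨_, ⟨n, rfl⟩, rfl⟩ c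
  rw [Units.coeHom_apply, Units.coeHom_apply, ← zp_units, ← zp_units]
  exact Submodule.subset_span ⟨(a, m, i, b, n, c), rfl⟩

theorem pbwSpan_powers_le_span_range_pbwBplus :
    pbwSpan (Submonoid.powers (bc2 q)) (Submonoid.powers (bd2 q)) ≤
      Submodule.span ℂ (Set.range (pbwBplus q)) := by
  refine pbwSpan_le ?_
  rintro a _ ⟨m, rfl⟩ i b _ ⟨n, rfl⟩ c
  exact Submodule.subset_span ⟨(a, m, i, b, n, c), rfl⟩

theorem adjoin_range_generators : Algebra.adjoin ℂ
    (Set.range fun g => RingQuot.mkAlgHom ℂ (BRel q) (gB g)) = ⊤ := by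
  have h := congrArg (Subalgebra.map (RingQuot.mkAlgHom ℂ (BRel q)))
    (FreeAlgebra.adjoin_range_ι ℂ BGen)
  rwa [AlgHom.map_adjoin, ← Set.range_comp, Algebra.map_top,
    (AlgHom.range_eq_top _).2 (RingQuot.mkAlgHom_surjective ℂ _)] at h

theorem span_range_pbwB (hq : q ≠ 0) : Submodule.span ℂ (Set.range (pbwB q)) = ⊤ := by
  have generator_mem : (Set.range fun g => RingQuot.mkAlgHom ℂ (BRel q) (gB g)) ⊆
      unitZPowers (bc2Unit q) ∪ unitZPowers (bd2Unit q) ∪ {bc1 q, br q, bd1 q, bw q} := by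
    rintro _ ⟨g, rfl⟩
    cases g
    case c2 => exact .inl (.inl (val_mem_unitZPowers (bc2Unit q)))
    case c2i => exact .inl (.inl (inv_mem_unitZPowers (bc2Unit q)))
    case d2 => exact .inl (.inr (val_mem_unitZPowers (bd2Unit q)))
    case d2i => exact .inl (.inr (inv_mem_unitZPowers (bd2Unit q)))
    all_goals exact .inr (by simp [bc1, br, bd1, bw])
  refine top_le_iff.1 ?_
  calc (⊤ : Submodule ℂ (AlgB q))
      = Subalgebra.toSubmodule (Algebra.adjoin ℂ _) := by
        rw [adjoin_range_generators, Algebra.top_toSubmodule]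
    _ ≤ Subalgebra.toSubmodule (Algebra.adjoin ℂ _) := Algebra.adjoin_mono generator_mem
    _ ≤ pbwSpan (unitZPowers (bc2Unit q)) (unitZPowers (bd2Unit q)) :=
        adjoin_le_pbwSpan hq le_rfl le_rfl (val_mem_unitZPowers _) (val_mem_unitZPowers _)
    _ ≤ _ := pbwSpan_unitZPowers_le_span_range_pbwB

theorem span_range_pbwBplus (hq : q ≠ 0) : Submodule.span ℂ (Set.range (pbwBplus q)) =
    Subalgebra.toSubmodule (Algebra.adjoin ℂ {bc1 q, bc2 q, bd1 q, bd2 q, br q, bw q}) := by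
  refine le_antisymm (Submodule.span_le.2 ?_) ?_
  · rintro _ ⟨⟨a, m, i, b, n, c⟩, rfl⟩
    have generator_mem {x : AlgB q} (hx : x ∈ ({bc1 q, bc2 q, bd1 q, bd2 q, br q, bw q} : Set _)) :=
      Algebra.subset_adjoin (R := ℂ) hx
    simp only [SetLike.mem_coe, Subalgebra.mem_toSubmodule, pbwBplus]
    repeat' first | apply mul_mem | apply pow_mem
    all_goals exact generator_mem (by simp)
  · have powers_le (u : (AlgB q)ˣ) : Submonoid.powers (u : AlgB q) ≤ unitZPowers u :=
      Submonoid.powers_le.2 (val_mem_unitZPowers u)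
    have generators_subset : {bc1 q, bc2 q, bd1 q, bd2 q, br q, bw q} ⊆
        (Submonoid.powers (bc2 q) ∪ Submonoid.powers (bd2 q) ∪ {bc1 q, br q, bd1 q, bw q} :
          Set (AlgB q)) := by
      rintro _ (rfl | rfl | rfl | rfl | rfl | rfl)
      case inr.inl => exact .inl (.inl (Submonoid.mem_powers _))
      case inr.inr.inr.inl => exact .inl (.inr (Submonoid.mem_powers _))
      all_goals exact .inr (by simp)
    calc Subalgebra.toSubmodule (Algebra.adjoin ℂ _)
        ≤ Subalgebra.toSubmodule (Algebra.adjoin ℂ _) := Algebra.adjoin_mono generators_subset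
      _ ≤ pbwSpan (Submonoid.powers (bc2 q)) (Submonoid.powers (bd2 q)) :=
          adjoin_le_pbwSpan hq (powers_le (bc2Unit q)) (powers_le (bd2Unit q))
            (Submonoid.mem_powers _) (Submonoid.mem_powers _)
      _ ≤ _ := pbwSpan_powers_le_span_range_pbwBplus

end Spanning

/-- The family of monomials `c₁^{a₁}c₂^{a₂}r^{ε}d₁^{b₁}d₂^{b₂}w^{c}`,
with `a₁, b₁, c ∈ ℕ₀`, `a₂, b₂ ∈ ℤ` (negative exponents interpreted via the inverse
generators) and `ε ∈ {0,1}`, is a ℂ-vector-space basis of `ℬ`; moreover, the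
monomials of this form with all exponents in `ℕ₀` form a ℂ-vector-space basis of
the subalgebra `ℬ⁺` of `ℬ` generated by `c₁, c₂, d₁, d₂, r, w`. -/
theorem stmt17 (q : ℂ) (hq : q ≠ 0) :
    (LinearIndependent ℂ (pbwB q) ∧
      Submodule.span ℂ (Set.range (pbwB q)) = ⊤) ∧
    (LinearIndependent ℂ (pbwBplus q) ∧
      Submodule.span ℂ (Set.range (pbwBplus q))
        = Subalgebra.toSubmodule
            (Algebra.adjoin ℂ {bc1 q, bc2 q, bd1 q, bd2 q, br q, bw q})) := by
  exact ⟨⟨linearIndependent_pbwB hq, span_range_pbwB hq⟩,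
    linearIndependent_pbwBplus hq, span_range_pbwBplus hq⟩
end
end
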